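/- arXiv:1611.08870 — 4 statements merged into one kernel-verified Lean document; each statement's English description precedes it below -/
import Mathlib

section
/- Suppose that for every λ in an index set Λ with 2 ≤ |Λ| ≤ ω, H(λ) is a π-tree on a topological space X_λ. Suppose also that for each finite nonempty I ⊆ Λ, whenever R_i ∈ Rise_{H(i)}(X_i) for all i ∈ I, the intersection ⋂_{i∈I} R_i is infinite. Then the product space ∏_{λ∈Λ} X_λ has a π-tree. -/
open Set

universe u v

/-- A family `γ` π-refines `δ`: every nonempty member of `δ` contains a
nonempty member of `γ`. -/
def PiRefines {α : Type*} (γ δ : Set (Set α)) : Prop :=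
  ∀ D ∈ δ, D.Nonempty → ∃ G ∈ γ, G.Nonempty ∧ G ⊆ D

/-- The finite intersection property. -/
def HasFIP {α : Type*} (γ : Set (Set α)) : Prop :=
  ∀ δ : Set (Set α), δ ⊆ γ → δ.Finite → δ.Nonempty → (⋂₀ δ).Nonempty

/-- `cofin A` is the family of complements in `A` of finite subsets of `A`. -/
def cofin (A : Set ℕ) : Set (Set ℕ) :=
  {B | ∃ C : Set ℕ, C.Finite ∧ C ⊆ A ∧ B = A \ C}

/-- A foliage tree on `X`: a set-theoretic tree (strict partial order with
well-ordered sets of strict predecessors) with a leaf (a subset of `X`)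
attached to each node. -/
structure FoliageTree (X : Type u) where
  Node : Type
  lt : Node → Node → Prop
  lt_irrefl : ∀ a, ¬ lt a a
  lt_trans : ∀ {a b c}, lt a b → lt b c → lt a c
  wellOrdered : ∀ a : Node, IsWellOrder {b : Node // lt b a} fun x y => lt x.1 y.1
  leaf : Node → Set X

/-- Strict proper-extension order on finite sequences of naturals. -/
def seqLT (a b : List ℕ) : Prop := a <+: b ∧ a ≠ b

namespace FoliageTree

variable {X : Type u}

/-- The sons (immediate successors) of a node. -/
def Sons (F : FoliageTree X) (x : F.Node) : Set F.Node :=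
  {s | F.lt x s ∧ ¬ ∃ t, F.lt x t ∧ F.lt t s}

/-- A node is maximal if it has no strict successor. -/
def IsMaxNode (F : FoliageTree X) (x : F.Node) : Prop := ¬ ∃ s, F.lt x s

/-- A chain of nodes. -/
def IsChainN (F : FoliageTree X) (C : Set F.Node) : Prop :=
  ∀ x ∈ C, ∀ y ∈ C, F.lt x y ∨ x = y ∨ F.lt y x

/-- A branch is a maximal chain. -/
def IsBranch (F : FoliageTree X) (B : Set F.Node) : Prop :=
  F.IsChainN B ∧ ∀ C, F.IsChainN C → B ⊆ C → B = C

/-- The height of a node: the order type of its set of strict predecessors. -/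
noncomputable def height (F : FoliageTree X) (v : F.Node) : Ordinal :=
  @Ordinal.type {b : F.Node // F.lt b v} (fun x y => F.lt x.1 y.1) (F.wellOrdered v)

/-- `shoot F v`: unions of leaves over cofinite sets of sons of `v`. -/
def shoot (F : FoliageTree X) (v : F.Node) : Set (Set X) :=
  {S | ∃ C : Set F.Node, C ⊆ F.Sons v ∧ (F.Sons v \ C).Finite ∧ S = ⋃ s ∈ C, F.leaf s}

/-- `scope F p`: the nodes whose leaf contains `p`. -/
def scope (F : FoliageTree X) (p : X) : Set F.Node := {x | p ∈ F.leaf x}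

/-- The union of all leaves. -/
def flesh (F : FoliageTree X) : Set X := ⋃ x, F.leaf x

/-- `F` is a foliage `ω,ω`-tree: its skeleton is order-isomorphic to
`(ω^{<ω}, ⊂)`. -/
def IsOmegaOmegaTree (F : FoliageTree X) : Prop := Nonempty (F.lt ≃r seqLT)

/-- `F` is locally strict: the leaf of every non-maximal node is the disjoint
union of the leaves of its sons. -/
def LocallyStrict (F : FoliageTree X) : Prop :=
  ∀ x, ¬ F.IsMaxNode x →
    F.leaf x = (⋃ s ∈ F.Sons x, F.leaf s) ∧
      ∀ s ∈ F.Sons x, ∀ t ∈ F.Sons x, s ≠ t → Disjoint (F.leaf s) (F.leaf t)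

/-- `F` has strict branches: it has nodes, and along every branch the
intersection of the leaves is a singleton. -/
def StrictBranches (F : FoliageTree X) : Prop :=
  Nonempty F.Node ∧ ∀ B, F.IsBranch B → ∃ p, (⋂ x ∈ B, F.leaf x) = {p}

/-- `r` is the root: the least node. -/
def IsRoot (F : FoliageTree X) (r : F.Node) : Prop := ∀ x, r = x ∨ F.lt r x

/-- All leaves are open. -/
def OpenIn [TopologicalSpace X] (F : FoliageTree X) : Prop := ∀ x, IsOpen (F.leaf x)

/-- `F` is a Baire foliage tree on `X`. -/
def IsBaireFoliageTree [TopologicalSpace X] (F : FoliageTree X) : Prop :=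
  F.OpenIn ∧ F.LocallyStrict ∧ F.IsOmegaOmegaTree ∧ F.StrictBranches ∧
    ∃ r, F.IsRoot r ∧ F.leaf r = Set.univ

/-- `F` grows into `X`. -/
def GrowsInto [TopologicalSpace X] (F : FoliageTree X) : Prop :=
  ∀ p : X, ∀ U ∈ nhds p, ∃ z ∈ F.scope p, PiRefines (F.shoot z) {U}

/-- `F` is a π-tree on `X`. -/
def IsPiTree [TopologicalSpace X] (F : FoliageTree X) : Prop :=
  F.IsBaireFoliageTree ∧ F.GrowsInto

/-- `rise F p U`: the set of (finite) heights of nodes `v` whose leaf contains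
`p` and whose shoot π-refines `{U}`. -/
noncomputable def rise (F : FoliageTree X) (p : X) (U : Set X) : Set ℕ :=
  {n | ∃ v ∈ F.scope p, PiRefines (F.shoot v) {U} ∧ F.height v = (n : Ordinal)}

/-- `Rise F`: all sets `rise F p U` for `p ∈ X` and `U` a neighbourhood of `p`. -/
def Rise [TopologicalSpace X] (F : FoliageTree X) : Set (Set ℕ) :=
  {R | ∃ p U, U ∈ nhds p ∧ R = F.rise p U}

end FoliageTree

/-- The initial segment of length `n` of an infinite sequence. -/
def preSeq (f : ℕ → ℕ) (n : ℕ) : List ℕ := (List.range n).map f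

lemma preSeq_length (f : ℕ → ℕ) (n : ℕ) : (preSeq f n).length = n := by simp [preSeq]

lemma preSeq_zero (f : ℕ → ℕ) : preSeq f 0 = [] := by simp [preSeq]

lemma preSeq_succ (f : ℕ → ℕ) (n : ℕ) : preSeq f (n + 1) = preSeq f n ++ [f n] := by
  simp [preSeq, List.range_succ]

lemma preSeq_eq_iff (f g : ℕ → ℕ) (n : ℕ) :
    preSeq f n = preSeq g n ↔ ∀ k < n, f k = g k := by
  simp [preSeq]

lemma preSeq_take (f : ℕ → ℕ) (n m : ℕ) (h : m ≤ n) : (preSeq f n).take m = preSeq f m := by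
  simp [preSeq, List.take_range, h, ← List.map_take]

lemma preSeq_prefix (f : ℕ → ℕ) {n m : ℕ} (h : m ≤ n) : preSeq f m <+: preSeq f n := by
  rw [← preSeq_take f n m h]; exact List.take_prefix _ _

lemma prefix_preSeq {f : ℕ → ℕ} {n : ℕ} {s : List ℕ} (h : s <+: preSeq f n) :
    s = preSeq f s.length := by
  have h1 := List.prefix_iff_eq_take.1 h
  have h2 := h.length_le
  rw [preSeq_length] at h2
  rw [preSeq_take f n _ h2] at h1
  exact h1

lemma seqLT_length {s t : List ℕ} (h : seqLT s t) : s.length < t.length := by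
  rcases lt_or_eq_of_le h.1.length_le with h1 | h1
  · exact h1
  · exact absurd (h.1.eq_of_length h1) h.2

lemma seqLT_of_prefix {s t : List ℕ} (h : s <+: t) (h' : s.length < t.length) : seqLT s t :=
  ⟨h, fun e => by subst e; omega⟩

lemma seqLT_concat (s : List ℕ) (i : ℕ) : seqLT s (s ++ [i]) :=
  seqLT_of_prefix (List.prefix_append _ _) (by simp)

lemma seqLT_trans {a b c : List ℕ} (h : seqLT a b) (h' : seqLT b c) : seqLT a c :=
  seqLT_of_prefix (h.1.trans h'.1) ((seqLT_length h).trans (seqLT_length h'))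

lemma exists_concat_prefix {s t : List ℕ} (h : seqLT s t) : ∃ i, s ++ [i] <+: t := by
  obtain ⟨⟨u, rfl⟩, h2⟩ := h
  cases u with
  | nil => simp at h2
  | cons i u => exact ⟨i, u, by simp⟩

/-- Being an immediate successor in the tree of finite sequences. -/
lemma seq_son_iff (s t : List ℕ) :
    (seqLT s t ∧ ¬ ∃ r, seqLT s r ∧ seqLT r t) ↔ ∃ i, t = s ++ [i] := by
  constructor
  · rintro ⟨h, h'⟩
    obtain ⟨i, hi⟩ := exists_concat_prefix h
    refine ⟨i, ?_⟩
    by_contra hne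
    exact h' ⟨s ++ [i], seqLT_concat s i, hi, fun e => hne e.symm⟩
  · rintro ⟨i, rfl⟩
    refine ⟨seqLT_concat s i, ?_⟩
    rintro ⟨r, h1, h2⟩
    have h3 := seqLT_length h1
    have h4 := seqLT_length h2
    simp at h4
    omega

/-- The predecessors of a sequence, embedded in `Fin` by length. -/
def predIso (a : List ℕ) :
    (fun x y : {b : List ℕ // seqLT b a} => seqLT x.1 y.1) ≃r
      ((· < ·) : Fin a.length → Fin a.length → Prop) where
  toFun b := ⟨b.1.length, seqLT_length b.2⟩
  invFun k := ⟨a.take k, seqLT_of_prefix (List.take_prefix _ _) (by simp)⟩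
  left_inv b := Subtype.ext (List.prefix_iff_eq_take.1 b.2.1).symm
  right_inv k := by
    apply Fin.ext
    simp [k.2.le]
  map_rel_iff' := by
    rintro ⟨x, hx⟩ ⟨y, hy⟩
    constructor
    · intro h
      have h : x.length < y.length := h
      exact seqLT_of_prefix (List.prefix_of_prefix_length_le hx.1 hy.1 h.le) h
    · intro h
      exact seqLT_length h

lemma seq_wellOrdered (a : List ℕ) :
    IsWellOrder {b : List ℕ // seqLT b a} fun x y => seqLT x.1 y.1 :=
  (predIso a).toRelEmbedding.isWellOrder

namespace FoliageTree

variable {X : Type u}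

lemma mem_sons_iff (F : FoliageTree X) (e : F.lt ≃r seqLT) (x y : F.Node) :
    y ∈ F.Sons x ↔ ∃ i, y = e.symm (e x ++ [i]) := by
  have : y ∈ F.Sons x ↔ (seqLT (e x) (e y) ∧ ¬ ∃ r, seqLT (e x) r ∧ seqLT r (e y)) := by
    unfold Sons
    simp only [mem_setOf_eq]
    rw [e.map_rel_iff]
    refine and_congr Iff.rfl (not_congr ?_)
    constructor
    · rintro ⟨t, h1, h2⟩
      exact ⟨e t, e.map_rel_iff.2 h1, e.map_rel_iff.2 h2⟩
    · rintro ⟨t, h1, h2⟩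
      refine ⟨e.symm t, ?_, ?_⟩
      · rw [← e.map_rel_iff]; simpa using h1
      · rw [← e.map_rel_iff]; simpa using h2
  rw [this, seq_son_iff]
  refine exists_congr fun i => ?_
  constructor
  · intro h; rw [← h]; simp
  · intro h; rw [h]; simp

lemma height_eq (F : FoliageTree X) (e : F.lt ≃r seqLT) (x : F.Node) :
    F.height x = ((e x).length : Ordinal) := by
  let E : (fun y z : {b : F.Node // F.lt b x} => F.lt y.1 z.1) ≃r
      (fun y z : {b : List ℕ // seqLT b (e x)} => seqLT y.1 z.1) :=
    { toEquiv := e.toEquiv.subtypeEquiv (fun a => (e.map_rel_iff (a := a) (b := x)).symm)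
      map_rel_iff' := by
        rintro ⟨y, hy⟩ ⟨z, hz⟩
        exact e.map_rel_iff }
  have := F.wellOrdered x
  unfold height
  rw [← Ordinal.type_fin]
  exact Ordinal.type_eq.2 ⟨E.trans (predIso (e x))⟩

lemma preSeq_branch (F : FoliageTree X) (e : F.lt ≃r seqLT) (f : ℕ → ℕ) :
    F.IsBranch (range fun n => e.symm (preSeq f n)) := by
  constructor
  · rintro _ ⟨n, rfl⟩ _ ⟨m, rfl⟩
    rcases lt_trichotomy n m with h | h | h
    · left
      rw [← e.map_rel_iff]
      simpa using seqLT_of_prefix (preSeq_prefix f h.le) (by simpa [preSeq_length] using h)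
    · right; left; rw [h]
    · right; right
      rw [← e.map_rel_iff]
      simpa using seqLT_of_prefix (preSeq_prefix f h.le) (by simpa [preSeq_length] using h)
  · intro C hC hB
    refine Subset.antisymm hB ?_
    intro c hc
    have h1 := hC c hc _ (hB ⟨(e c).length + 1, rfl⟩)
    have h2 : e c <+: preSeq f ((e c).length + 1) := by
      rcases h1 with h | h | h
      · rw [← e.map_rel_iff] at h
        simpa using h.1
      · have : e c = preSeq f ((e c).length + 1) := by
          conv_lhs => rw [h]
          simp
        rw [← this]
      · rw [← e.map_rel_iff] at h
        have := seqLT_length h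
        simp [preSeq_length] at this
    refine ⟨(e c).length, ?_⟩
    simp only
    rw [← prefix_preSeq h2]
    simp

/-- From a π-tree to coordinates in the Baire space. -/
lemma exists_coords [TopologicalSpace X] (F : FoliageTree X) (hF : F.IsPiTree) :
    ∃ φ : X → ℕ → ℕ, Function.Bijective φ ∧ (∀ k i, IsOpen {p | φ p k = i}) ∧
      ∀ p U, U ∈ nhds p → ∀ n ∈ F.rise p U, ∃ m, ∀ q, (∀ k < n, φ q k = φ p k) →
        m ≤ φ q n → q ∈ U := by
  obtain ⟨⟨hopen, hloc, ⟨e⟩, ⟨-, hbr⟩, r, hr, hru⟩, -⟩ := hF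
  set L : List ℕ → Set X := fun s => F.leaf (e.symm s) with hL
  have hroot : e.symm [] = r := by
    rcases hr (e.symm []) with h | h
    · exact h.symm
    · rw [← e.map_rel_iff] at h
      have := seqLT_length h
      simp at this
  have hL0 : L [] = univ := by simp [hL, hroot, hru]
  have hnm : ∀ x, ¬ F.IsMaxNode x := by
    intro x h
    refine h ⟨e.symm (e x ++ [0]), ?_⟩
    rw [← e.map_rel_iff]
    simpa using seqLT_concat (e x) 0
  have hson : ∀ s i, e.symm (s ++ [i]) ∈ F.Sons (e.symm s) := by
    intro s i
    rw [mem_sons_iff F e]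
    exact ⟨i, by simp⟩
  have hLs : ∀ s p, p ∈ L s → ∃ i, p ∈ L (s ++ [i]) := by
    intro s p hp
    have h1 := (hloc (e.symm s) (hnm _)).1
    have h2 : p ∈ F.leaf (e.symm s) := hp
    rw [h1] at h2
    simp only [mem_iUnion] at h2
    obtain ⟨t, ht, hpt⟩ := h2
    rw [mem_sons_iff F e] at ht
    obtain ⟨i, rfl⟩ := ht
    exact ⟨i, by simpa [hL] using hpt⟩
  have hLd : ∀ s p i, p ∈ L (s ++ [i]) → p ∈ L s := by
    intro s p i hp
    have h1 := (hloc (e.symm s) (hnm _)).1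
    change p ∈ F.leaf (e.symm s)
    rw [h1]
    simp only [mem_iUnion]
    exact ⟨_, hson s i, hp⟩
  have hLu : ∀ s p i j, p ∈ L (s ++ [i]) → p ∈ L (s ++ [j]) → i = j := by
    intro s p i j hi hj
    by_contra hne
    have h1 := (hloc (e.symm s) (hnm _)).2 _ (hson s i) _ (hson s j) (by
      intro h
      have := e.symm.injective h
      simp at this
      exact hne this)
    exact (Set.disjoint_left.1 h1) hi hj
  choose! nxt hnxt using hLs
  have hex : ∀ p, ∃ f : ℕ → ℕ, ∀ n, p ∈ L (preSeq f n) := by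
    intro p
    let g : ℕ → List ℕ := fun n => Nat.rec [] (fun _ s => s ++ [nxt s p]) n
    have hg : ∀ n, preSeq (fun k => nxt (g k) p) n = g n := by
      intro n
      induction n with
      | zero => exact preSeq_zero _
      | succ n ih => rw [preSeq_succ, ih]
    refine ⟨fun k => nxt (g k) p, fun n => ?_⟩
    rw [hg]
    induction n with
    | zero => change p ∈ L []; rw [hL0]; trivial
    | succ n ih => exact hnxt _ _ ih
  choose φ hφ using hex
  have huniq : ∀ n s p, s.length = n → p ∈ L s → s = preSeq (φ p) n := by
    intro n
    induction n with
    | zero =>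
      intro s p hs _
      rw [preSeq_zero]; exact List.length_eq_zero_iff.1 hs
    | succ n ih =>
      intro s p hs hp
      rcases List.eq_nil_or_concat s with h | ⟨t, i, h⟩
      · subst h; simp at hs
      · subst h
        simp only [List.concat_eq_append] at hs hp ⊢
        simp at hs
        have h1 := ih t p hs (hLd _ _ _ hp)
        have h2 := hφ p (n + 1)
        rw [preSeq_succ, ← h1] at h2
        rw [preSeq_succ, ← h1, hLu _ _ _ _ hp h2]
  have hmem : ∀ f : ℕ → ℕ, ∀ p, (∀ n, p ∈ L (preSeq f n)) ↔ φ p = f := by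
    intro f p
    constructor
    · intro h
      funext k
      have h1 := huniq (k + 1) _ p (preSeq_length f _) (h (k + 1))
      exact ((preSeq_eq_iff _ _ _).1 h1 k (Nat.lt_succ_self k)).symm
    · rintro rfl
      exact hφ p
  have hsing : ∀ f : ℕ → ℕ, ∃ p, ∀ q, φ q = f ↔ q = p := by
    intro f
    obtain ⟨p, hp⟩ := hbr _ (preSeq_branch F e f)
    refine ⟨p, fun q => ?_⟩
    rw [← hmem]
    have : q ∈ (⋂ x ∈ (range fun n => e.symm (preSeq f n)), F.leaf x) ↔ q = p := by
      rw [hp]; exact Iff.rfl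
    rw [← this]
    simp [hL]
  refine ⟨φ, ⟨?_, ?_⟩, ?_, ?_⟩
  · intro p q hpq
    obtain ⟨r, hr⟩ := hsing (φ p)
    rw [(hr p).1 rfl, (hr q).1 hpq.symm]
  · intro f
    obtain ⟨p, hp⟩ := hsing f
    exact ⟨p, (hp p).2 rfl⟩
  · intro k i
    rw [isOpen_iff_mem_nhds]
    intro p hp
    refine Filter.mem_of_superset ((hopen (e.symm (preSeq (φ p) (k + 1)))).mem_nhds (hφ p (k + 1))) ?_
    intro q hq
    have h1 := huniq (k + 1) _ q (preSeq_length _ _) hq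
    have h2 := (preSeq_eq_iff _ _ _).1 h1 k (Nat.lt_succ_self k)
    exact h2.symm.trans hp
  · rintro p U hU n ⟨v, hv, href, hh⟩
    rw [height_eq F e] at hh
    have hlen : (e v).length = n := by exact_mod_cast hh
    have hv' : p ∈ L (e v) := by
      have hv2 : p ∈ F.leaf v := hv
      simpa [hL] using hv2
    have hev := huniq n _ p hlen hv'
    obtain ⟨G, ⟨C, hCs, hfin, rfl⟩, -, hGU⟩ := href U rfl ⟨p, mem_of_mem_nhds hU⟩
    have hinj : Function.Injective fun i : ℕ => e.symm (e v ++ [i]) := by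
      intro i j h
      have := e.symm.injective h
      simpa using this
    have hfin' := hfin.preimage (hinj.injOn (s := _))
    obtain ⟨m, hm⟩ := hfin'.bddAbove
    refine ⟨m + 1, fun q hq hqm => ?_⟩
    have hq1 := hφ q (n + 1)
    rw [preSeq_succ, (preSeq_eq_iff _ _ _).2 hq, ← hev] at hq1
    apply hGU
    simp only [mem_iUnion]
    refine ⟨e.symm (e v ++ [φ q n]), ?_, hq1⟩
    by_contra hc
    have : φ q n ≤ m := hm ⟨(mem_sons_iff F e _ _).2 ⟨_, rfl⟩, hc⟩
    omega

/-- The foliage tree determined by coordinates in the Baire space. -/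
def ofCoords (φ : X → ℕ → ℕ) : FoliageTree X where
  Node := List ℕ
  lt := seqLT
  lt_irrefl a h := h.2 rfl
  lt_trans := seqLT_trans
  wellOrdered := seq_wellOrdered
  leaf s := {p | preSeq (φ p) s.length = s}

lemma seq_branch (φ : X → ℕ → ℕ) (B : Set (List ℕ)) (hB : (ofCoords φ).IsBranch B) :
    ∃ f : ℕ → ℕ, B = range (preSeq f) := by
  obtain ⟨hch, hmax⟩ := hB
  have hch : ∀ x ∈ B, ∀ y ∈ B, seqLT x y ∨ x = y ∨ seqLT y x := hch
  have hmax : ∀ C : Set (List ℕ), (∀ x ∈ C, ∀ y ∈ C, seqLT x y ∨ x = y ∨ seqLT y x) →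
    B ⊆ C → B = C := hmax
  have hpre : ∀ x ∈ B, ∀ y ∈ B, x.length ≤ y.length → x <+: y := by
    intro x hx y hy h
    rcases hch x hx y hy with h1 | h1 | h1
    · exact h1.1
    · rw [h1]
    · have := seqLT_length h1; omega
  have hne : B.Nonempty := by
    by_contra h
    rw [not_nonempty_iff_eq_empty] at h
    have := hmax {[]} (by simp) (by simp [h])
    rw [h] at this
    exact (singleton_ne_empty _ this.symm)
  have hunb : ∀ n, ∃ s ∈ B, n < s.length := by
    by_contra! hb
    obtain ⟨n, hn⟩ := hb
    have hfin : (List.length '' B).Finite := (finite_Iic n).subset (by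
      rintro _ ⟨s, hs, rfl⟩; exact hn s hs)
    obtain ⟨_, ⟨s, hs, rfl⟩, hsm⟩ := hfin.exists_maximal (hne.image _)
    have hsm' : ∀ t ∈ B, t <+: s := by
      intro t ht
      refine hpre t ht s hs ?_
      rcases le_total t.length s.length with h | h
      · exact h
      · exact hsm ⟨t, ht, rfl⟩ h
    have hlt : ∀ t ∈ B, seqLT t (s ++ [0]) := fun t ht =>
      seqLT_of_prefix ((hsm' t ht).trans (List.prefix_append _ _)) (by
        have := (hsm' t ht).length_le
        simp; omega)
    have h1 := hmax (insert (s ++ [0]) B) (by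
      rintro x (rfl | hx) y (rfl | hy)
      · right; left; rfl
      · right; right; exact hlt y hy
      · left; exact hlt x hx
      · exact hch x hx y hy) (subset_insert _ _)
    have h2 : s ++ [0] ∈ B := by rw [h1]; exact mem_insert _ _
    have := (hsm' _ h2).length_le
    simp at this
  choose s hsB hsl using hunb
  let f : ℕ → ℕ := fun n => (s n)[n]'(hsl n)
  have hf : ∀ t ∈ B, t = preSeq f t.length := by
    intro t ht
    apply List.ext_getElem
    · rw [preSeq_length]
    · intro i h1 h2
      simp only [preSeq, List.getElem_map, List.getElem_range]
      change t[i] = (s i)[i]'(hsl i)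
      rcases le_total t.length (s i).length with h | h
      · exact (hpre t ht _ (hsB i) h).getElem h1
      · exact ((hpre _ (hsB i) t ht h).getElem (hsl i)).symm
  refine ⟨f, hmax _ ?_ ?_⟩
  · rintro _ ⟨n, rfl⟩ _ ⟨m, rfl⟩
    rcases lt_trichotomy n m with h | h | h
    · left
      exact seqLT_of_prefix (preSeq_prefix f h.le) (by simpa [preSeq_length] using h)
    · right; left; rw [h]
    · right; right
      exact seqLT_of_prefix (preSeq_prefix f h.le) (by simpa [preSeq_length] using h)
  · intro t ht
    exact ⟨_, (hf t ht).symm⟩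

lemma ofCoords_isPiTree [TopologicalSpace X] (φ : X → ℕ → ℕ) (hφ : Function.Bijective φ)
    (hopen : ∀ k i, IsOpen {p | φ p k = i})
    (hgrow : ∀ p, ∀ U ∈ nhds p, ∃ n m, ∀ q, (∀ k < n, φ q k = φ p k) → m ≤ φ q n → q ∈ U) :
    (ofCoords φ).IsPiTree := by
  have hsons : ∀ s t : List ℕ, t ∈ (ofCoords φ).Sons s ↔ ∃ i, t = s ++ [i] :=
    fun s t => seq_son_iff s t
  have hleaf : ∀ (s : List ℕ) p, p ∈ (ofCoords φ).leaf s ↔ preSeq (φ p) s.length = s :=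
    fun s p => Iff.rfl
  have hleafs : ∀ (s : List ℕ) i p, p ∈ (ofCoords φ).leaf (s ++ [i] : List ℕ) ↔
      preSeq (φ p) s.length = s ∧ φ p s.length = i := by
    intro s i p
    rw [hleaf]
    simp only [List.length_append, List.length_singleton, preSeq_succ]
    constructor
    · intro h
      have := List.append_inj' h rfl
      simpa using this
    · rintro ⟨h1, h2⟩
      rw [h1, h2]
  refine ⟨⟨?_, ?_, ⟨RelIso.refl _⟩, ⟨⟨([] : List ℕ)⟩, ?_⟩, ([] : List ℕ), ?_, ?_⟩, ?_⟩
  · intro s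
    change List ℕ at s
    have : (ofCoords φ).leaf s = ⋂ i : Fin s.length, {p | φ p i = s[i.1]'i.2} := by
      ext p
      rw [hleaf]
      simp only [mem_iInter]
      constructor
      · intro h i
        have h3 : (preSeq (φ p) s.length)[i.1]? = s[i.1]? := by rw [h]
        change φ p i = s[i.1]'i.2
        simpa [preSeq] using h3
      · intro h
        apply List.ext_getElem
        · rw [preSeq_length]
        · intro i h1 h2
          have h3 : φ p i = s[i] := h ⟨i, h2⟩
          simpa [preSeq] using h3
    rw [this]
    exact isOpen_iInter_of_finite fun i => hopen _ _
  · intro s _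
    constructor
    · ext p
      simp only [mem_iUnion]
      constructor
      · intro h
        exact ⟨_, (hsons s _).2 ⟨φ p (List.length s), rfl⟩, (hleafs _ _ _).2 ⟨h, rfl⟩⟩
      · rintro ⟨t, ht, hp⟩
        obtain ⟨i, rfl⟩ := (hsons s t).1 ht
        exact ((hleafs _ _ _).1 hp).1
    · intro t ht t' ht' hne
      obtain ⟨i, rfl⟩ := (hsons s t).1 ht
      obtain ⟨j, rfl⟩ := (hsons s t').1 ht'
      rw [Set.disjoint_left]
      intro p hp hp'
      apply hne
      rw [← ((hleafs _ _ _).1 hp).2, ← ((hleafs _ _ _).1 hp').2]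
  · intro B hB
    obtain ⟨f, rfl⟩ := seq_branch φ B hB
    obtain ⟨p, rfl⟩ := hφ.2 f
    refine ⟨p, ?_⟩
    ext q
    simp only [mem_iInter, mem_singleton_iff]
    constructor
    · intro h
      apply hφ.1
      funext k
      have := h _ ⟨k + 1, rfl⟩
      rw [hleaf, preSeq_length, preSeq_eq_iff] at this
      exact this k (Nat.lt_succ_self k)
    · rintro rfl _ ⟨n, rfl⟩
      rw [hleaf, preSeq_length]
  · intro s
    change [] = s ∨ seqLT [] s
    by_cases h : ([] : List ℕ) = s
    · exact Or.inl h
    · exact Or.inr ⟨List.nil_prefix, h⟩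
  · ext p
    simp only [mem_univ, iff_true]
    exact preSeq_zero _
  · intro p U hU
    obtain ⟨n, m, h⟩ := hgrow p U hU
    refine ⟨preSeq (φ p) n, ?_, ?_⟩
    · change preSeq (φ p) (preSeq (φ p) n).length = _
      rw [preSeq_length]
    · rintro D hD -
      rw [mem_singleton_iff] at hD
      subst hD
      refine ⟨_, ⟨{t : List ℕ | ∃ i, m ≤ i ∧ t = preSeq (φ p) n ++ [i]}, ?_, ?_, rfl⟩, ?_, ?_⟩
      · rintro t ⟨i, -, rfl⟩
        exact (hsons _ _).2 ⟨i, rfl⟩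
      · refine ((finite_Iio m).image fun i => preSeq (φ p) n ++ [i]).subset ?_
        rintro t ⟨ht, ht'⟩
        obtain ⟨i, rfl⟩ := (hsons _ _).1 ht
        refine ⟨i, ?_, rfl⟩
        by_contra hi
        exact ht' ⟨i, not_lt.1 hi, rfl⟩
      · obtain ⟨q, hq⟩ := hφ.2 (fun k => if k < n then φ p k else m)
        refine ⟨q, ?_⟩
        simp only [mem_iUnion]
        refine ⟨_, ⟨m, le_rfl, rfl⟩, ?_⟩
        rw [hleafs, preSeq_length, preSeq_eq_iff, hq]
        refine ⟨fun k hk => by simp [hk], by simp⟩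
      · intro q hq
        simp only [mem_iUnion] at hq
        obtain ⟨t, ⟨i, hi, rfl⟩, hq⟩ := hq
        rw [hleafs, preSeq_length, preSeq_eq_iff] at hq
        exact h q hq.1 (hq.2 ▸ hi)

end FoliageTree

/-- Splitting a finite power of `ℕ` into infinitely many infinite pieces by the minimum. -/
lemma exists_minEquiv (J : Type) [Finite J] [Nontrivial J] :
    ∃ E : (J → ℕ) ≃ ℕ × ℕ, ∀ f j, (E f).1 ≤ f j := by
  classical
  let μ : (J → ℕ) → ℕ := fun f => ⨅ j, f j
  have hinf : ∀ k, Infinite {f // μ f = k} := by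
    intro k
    obtain ⟨a, b, hab⟩ := exists_pair_ne J
    refine Infinite.of_injective
      (fun t : ℕ => (⟨fun j => if j = a then k else k + t, ?_⟩ : {f // μ f = k})) ?_
    · apply le_antisymm
      · have := ciInf_le (OrderBot.bddBelow (range fun j => if j = a then k else k + t)) a
        simpa using this
      · refine le_ciInf fun j => ?_
        change k ≤ if j = a then k else k + t
        split_ifs <;> omega
    · intro t t' h
      have := congrFun (congrArg Subtype.val h) b
      simpa [hab.symm] using this
  have hden : ∀ k, Nonempty ({f // μ f = k} ≃ ℕ) := fun k => by
    have := hinf k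
    exact nonempty_equiv_of_countable
  let d := fun k => (hden k).some
  refine ⟨(Equiv.sigmaFiberEquiv μ).symm.trans
    ((Equiv.sigmaCongrRight d).trans (Equiv.sigmaEquivProd ℕ ℕ)), fun f j => ?_⟩
  change μ f ≤ f j
  exact ciInf_le (OrderBot.bddBelow _) j

/-- Theorem 1 of the paper. -/
theorem product_has_piTree_of_infinite_rise_intersections
    {Λ : Type} [Countable Λ] (hΛ : ∃ a b : Λ, a ≠ b)
    {X : Λ → Type u} [∀ l, TopologicalSpace (X l)]
    (H : ∀ l, FoliageTree (X l)) (hH : ∀ l, (H l).IsPiTree)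
    (hrise : ∀ I : Finset Λ, I.Nonempty → ∀ R : Λ → Set ℕ,
      (∀ i ∈ I, R i ∈ (H i).Rise) → (⋂ i ∈ I, R i).Infinite) :
    ∃ G : FoliageTree (∀ l, X l), G.IsPiTree := by
  classical
  choose φ hbij hopen hgr using fun l => (H l).exists_coords (hH l)
  obtain ⟨a, b, hab⟩ := hΛ
  obtain ⟨e, he⟩ := exists_injective_nat Λ
  let e' : Λ → ℕ := fun l => if l = a ∨ l = b then 0 else e l
  let st : Λ × ℕ → ℕ := fun x => max x.2 (e' x.1)
  have hfin : ∀ n, Finite {x // st x = n} := by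
    intro n
    have h1 : {l | e' l ≤ n}.Finite := by
      refine (((finite_Iic n).preimage (he.injOn (s := _))).union
        (Set.toFinite {a, b})).subset ?_
      intro l hl
      by_cases h : l = a ∨ l = b
      · right; simpa using h
      · left
        simpa [e', h] using hl
    refine ((h1.prod (finite_Iic n)).subset ?_).to_subtype (s := {x | st x = n})
    rintro ⟨l, k⟩ h
    have h : max k (e' l) = n := h
    exact ⟨show e' l ≤ n by omega, show k ≤ n by omega⟩
  have hnt : ∀ n, Nontrivial {x // st x = n} := by
    intro n
    refine ⟨⟨(a, n), by simp [st, e']⟩, ⟨(b, n), by simp [st, e']⟩, ?_⟩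
    intro h
    simp at h
    exact hab h
  choose E hE using fun n => exists_minEquiv {x // st x = n}
  let r : (∀ l, X l) → ∀ n, {x // st x = n} → ℕ := fun p n j => φ j.1.1 (p j.1.1) j.1.2
  let ψ : (∀ l, X l) → ℕ → ℕ := fun p N =>
    if N % 2 = 0 then (E (N / 2) (r p (N / 2))).1 else (E (N / 2) (r p (N / 2))).2
  have hψ0 : ∀ p n, ψ p (2 * n) = (E n (r p n)).1 := by
    intro p n
    have h1 : 2 * n % 2 = 0 := by omega
    have h2 : 2 * n / 2 = n := by omega
    simp only [ψ, h1, if_true]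
    rw [h2]
  have hψ1 : ∀ p n, ψ p (2 * n + 1) = (E n (r p n)).2 := by
    intro p n
    have h1 : ¬ (2 * n + 1) % 2 = 0 := by omega
    have h2 : (2 * n + 1) / 2 = n := by omega
    simp only [ψ, h1, if_false]
    rw [h2]
  have hdec : ∀ p q n, (∀ k < 2 * n, ψ q k = ψ p k) →
      ∀ l k, st (l, k) < n → φ l (q l) k = φ l (p l) k := by
    intro p q n h l k hlk
    have h0 := h (2 * st (l, k)) (by omega)
    have h1 := h (2 * st (l, k) + 1) (by omega)
    rw [hψ0, hψ0] at h0
    rw [hψ1, hψ1] at h1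
    have h2 := (E _).injective (Prod.ext h0 h1)
    exact congrFun h2 ⟨(l, k), rfl⟩
  refine ⟨FoliageTree.ofCoords ψ, FoliageTree.ofCoords_isPiTree ψ ⟨?_, ?_⟩ ?_ ?_⟩
  · intro p q h
    funext l
    apply (hbij l).1
    funext k
    exact hdec q p (st (l, k) + 1) (fun _ _ => by rw [h]) l k (Nat.lt_succ_self _)
  · intro g
    choose p hp using fun l => (hbij l).2
      (fun k => (E (st (l, k))).symm (g (2 * st (l, k)), g (2 * st (l, k) + 1)) ⟨(l, k), rfl⟩)
    have hr : ∀ n, r p n = (E n).symm (g (2 * n), g (2 * n + 1)) := by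
      intro n
      funext j
      obtain ⟨⟨l, k⟩, rfl⟩ := j
      change φ l (p l) k = _
      rw [hp l]
    refine ⟨p, ?_⟩
    funext N
    rcases Nat.even_or_odd' N with ⟨n, rfl | rfl⟩
    · rw [hψ0, hr]; simp
    · rw [hψ1, hr]; simp
  · have hcont : ∀ l k, Continuous fun p : ∀ l, X l => φ l (p l) k := by
      intro l k
      rw [continuous_discrete_rng]
      intro i
      exact (hopen l k i).preimage (continuous_apply l)
    have hrc : ∀ n, Continuous fun p => r p n :=
      fun n => continuous_pi fun j => hcont _ _
    intro N i
    have : Continuous fun p => ψ p N := by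
      have h1 : Continuous fun p => E (N / 2) (r p (N / 2)) :=
        (continuous_of_discreteTopology (f := E (N / 2))).comp (hrc _)
      by_cases h : N % 2 = 0
      · simp only [ψ, h, if_true]
        exact continuous_fst.comp h1
      · simp only [ψ, h, if_false]
        exact continuous_snd.comp h1
    exact (isOpen_discrete ({i} : Set ℕ)).preimage this
  · intro p U hU
    rw [nhds_pi, Filter.mem_pi'] at hU
    obtain ⟨I, t, ht, htU⟩ := hU
    have hinf := hrise (insert a I) (Finset.insert_nonempty _ _)
      (fun l => (H l).rise (p l) (t l)) (fun l _ => ⟨p l, t l, ht l, rfl⟩)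
    obtain ⟨n, hn, hnI⟩ := hinf.exists_gt (I.sup e')
    simp only [mem_iInter] at hn
    have hm : ∀ l, ∃ m, l ∈ I → ∀ q, (∀ k < n, φ l q k = φ l (p l) k) →
        m ≤ φ l q n → q ∈ t l := by
      intro l
      by_cases hl : l ∈ I
      · obtain ⟨m, hm⟩ := hgr l (p l) (t l) (ht l) n (hn l (Finset.mem_insert_of_mem hl))
        exact ⟨m, fun _ => hm⟩
      · exact ⟨0, fun h => absurd h hl⟩
    choose m hm using hm
    refine ⟨2 * n, I.sup m, fun q hq hqm => htU ?_⟩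
    intro l hl
    have hl : l ∈ I := hl
    have hel : e' l < n := lt_of_le_of_lt (Finset.le_sup hl) hnI
    refine hm l hl (q l) (fun k hk => ?_) ?_
    · exact hdec p q n hq l k (max_lt hk hel)
    · refine (Finset.le_sup hl).trans (hqm.trans ?_)
      rw [hψ0]
      exact hE n (r q n) ⟨(l, n), max_eq_left hel.le⟩
end

section
/- Suppose that for every α in an index set A with 1 ≤ |A| ≤ ω, F(α) is a π-tree on a topological space X_α, and for each α ∈ A there is a family γ_α of subsets of ω such that |γ_α| ≤ ω, γ_α has the finite intersection property, and γ_α ≫ Rise_{F(α)}(X_α). Then the product space ∏_{α∈A} X_α has a π-tree. -/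
open Set

universe u v

namespace PiProd

/-- The initial segment of length `n` of `x`. -/
def pre (x : ℕ → ℕ) (n : ℕ) : List ℕ := (List.range n).map x

theorem pre_length (x : ℕ → ℕ) (n : ℕ) : (pre x n).length = n := by simp [pre]

theorem pre_zero (x : ℕ → ℕ) : pre x 0 = [] := by simp [pre]

theorem pre_succ (x : ℕ → ℕ) (n : ℕ) : pre x (n + 1) = pre x n ++ [x n] := by
  simp [pre, List.range_succ]

theorem pre_eq_iff (x y : ℕ → ℕ) (n : ℕ) : pre x n = pre y n ↔ ∀ i < n, x i = y i := by
  simp [pre]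

theorem pre_initial (x : ℕ → ℕ) {m n : ℕ} (h : m ≤ n) : pre x m <+: pre x n := by
  induction n, h using Nat.le_induction with
  | base => exact List.prefix_rfl
  | succ n _ ih => rw [pre_succ]; exact ih.trans (List.prefix_append _ _)

theorem prefix_pre {x : ℕ → ℕ} {s : List ℕ} {n : ℕ} (h : s <+: pre x n) :
    s = pre x s.length := by
  have hl : s.length ≤ n := by simpa [pre_length] using h.length_le
  have h2 := pre_initial x hl
  exact (List.prefix_of_prefix_length_le h h2 (by rw [pre_length])).eq_of_length
    (by rw [pre_length])

theorem seqLT_length {a b : List ℕ} (h : seqLT a b) : a.length < b.length := by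
  rcases lt_or_eq_of_le h.1.length_le with h1 | h1
  · exact h1
  · exact absurd (h.1.eq_of_length h1) h.2

theorem seqLT_append (s : List ℕ) (k : ℕ) : seqLT s (s ++ [k]) :=
  ⟨List.prefix_append _ _, by simp⟩

theorem seq_sons (s t : List ℕ) :
    (seqLT s t ∧ ¬ ∃ r, seqLT s r ∧ seqLT r t) ↔ ∃ k, t = s ++ [k] := by
  constructor
  · rintro ⟨⟨⟨u, rfl⟩, h2⟩, h3⟩
    rcases u with _ | ⟨k, u⟩
    · simp at h2
    · refine ⟨k, ?_⟩
      by_contra hne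
      refine h3 ⟨s ++ [k], seqLT_append s k, ⟨⟨u, by simp⟩, fun h => hne h.symm⟩⟩
  · rintro ⟨k, rfl⟩
    refine ⟨seqLT_append s k, ?_⟩
    rintro ⟨r, h1, h2⟩
    have := seqLT_length h1
    have := seqLT_length h2
    simp at this
    omega

theorem pre_chain (x : ℕ → ℕ) (m n : ℕ) :
    seqLT (pre x m) (pre x n) ∨ pre x m = pre x n ∨ seqLT (pre x n) (pre x m) := by
  rcases lt_trichotomy m n with h | h | h
  · left
    refine ⟨pre_initial x h.le, fun e => ?_⟩
    have := congrArg List.length e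
    simp only [pre_length] at this; omega
  · right; left; rw [h]
  · right; right
    refine ⟨pre_initial x h.le, fun e => ?_⟩
    have := congrArg List.length e
    simp only [pre_length] at this; omega

theorem seq_comp {a b : List ℕ} (h : seqLT a b ∨ a = b ∨ seqLT b a) (hl : a.length ≤ b.length) :
    a <+: b := by
  rcases h with h | h | h
  · exact h.1
  · rw [h]
  · have := seqLT_length h; omega

theorem seq_tri {a b c : List ℕ} (ha : seqLT a c) (hb : seqLT b c) :
    seqLT a b ∨ a = b ∨ seqLT b a := by
  by_cases hab : a = b
  · exact Or.inr (Or.inl hab)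
  rcases List.prefix_or_prefix_of_prefix ha.1 hb.1 with h | h
  · exact Or.inl ⟨h, hab⟩
  · exact Or.inr (Or.inr ⟨h, fun e => hab e.symm⟩)

/-- The chain of initial segments of `x` is maximal. -/
theorem pre_branch (x : ℕ → ℕ) (C : Set (List ℕ))
    (hC : ∀ a ∈ C, ∀ b ∈ C, seqLT a b ∨ a = b ∨ seqLT b a)
    (hs : ∀ n, pre x n ∈ C) : ∀ a ∈ C, ∃ n, a = pre x n := by
  intro a ha
  have := seq_comp (hC a ha _ (hs a.length)) (by rw [pre_length])
  exact ⟨_, prefix_pre this⟩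

/-- Every maximal chain of finite sequences comes from an infinite sequence. -/
theorem branch_pre (B : Set (List ℕ))
    (hB : ∀ a ∈ B, ∀ b ∈ B, seqLT a b ∨ a = b ∨ seqLT b a)
    (hm : ∀ C : Set (List ℕ), (∀ a ∈ C, ∀ b ∈ C, seqLT a b ∨ a = b ∨ seqLT b a) → B ⊆ C → B = C) :
    ∃ x : ℕ → ℕ, B = {s | ∃ n, s = pre x n} := by
  have hunb : ∀ n, ∃ a ∈ B, n < a.length := by
    by_contra! hcon
    obtain ⟨n, hn⟩ := hcon
    -- a longest element
    have hne : B.Nonempty := by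
      by_contra he
      rw [Set.not_nonempty_iff_eq_empty] at he
      have := hm {[]} (by rintro a rfl b rfl; simp) (by simp [he])
      rw [he] at this
      exact Set.singleton_ne_empty _ this.symm
    obtain ⟨s, hsB, hs⟩ : ∃ s ∈ B, ∀ a ∈ B, a.length ≤ s.length := by
      have hfin : (List.length '' B).Finite :=
        (Set.finite_Iic n).subset (by rintro _ ⟨a, ha, rfl⟩; exact hn a ha)
      obtain ⟨m, ⟨s, hsB, rfl⟩, hmax⟩ := hfin.exists_maximal (hne.image _)
      refine ⟨s, hsB, fun a ha => ?_⟩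
      rcases le_total a.length s.length with h | h
      · exact h
      · exact hmax ⟨a, ha, rfl⟩ h
    have hlt : ∀ a ∈ B, seqLT a (s ++ [0]) := by
      intro a ha
      have h1 := seq_comp (hB a ha s hsB) (hs a ha)
      refine ⟨h1.trans (List.prefix_append _ _), fun e => ?_⟩
      have := hs a ha
      rw [e] at this; simp at this
    have := hm (insert (s ++ [0]) B) (by
      rintro a (rfl | ha) b (rfl | hb)
      · simp
      · exact Or.inr (Or.inr (hlt b hb))
      · exact Or.inl (hlt a ha)
      · exact hB a ha b hb) (Set.subset_insert _ _)
    have h2 : s ++ [0] ∈ B := by rw [this]; exact Set.mem_insert _ _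
    exact (hlt _ h2).2 rfl
  choose a haB hal using hunb
  refine ⟨fun n => (a n)[n]'(hal n), ?_⟩
  set x : ℕ → ℕ := fun n => (a n)[n]'(hal n) with hx
  apply hm
  · rintro _ ⟨m, rfl⟩ _ ⟨n, rfl⟩
    exact pre_chain x m n
  · intro s hs
    refine ⟨s.length, ?_⟩
    apply List.ext_getElem
    · rw [pre_length]
    · intro i h1 h2
      simp only [pre, List.getElem_map, List.getElem_range, hx]
      rcases le_total s.length (a i).length with h | h
      · exact (seq_comp (hB s hs _ (haB i)) h).getElem h1
      · exact ((seq_comp (hB _ (haB i) s hs) h).getElem (hal i)).symm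

theorem seq_card (s : List ℕ) : Nonempty (Fin s.length ≃ {t : List ℕ // seqLT t s}) := by
  refine ⟨Equiv.ofBijective (fun i => ⟨s.take i, List.take_prefix _ _, fun e => ?_⟩) ⟨?_, ?_⟩⟩
  · have := congrArg List.length e
    simp at this; omega
  · intro i j h
    have := congrArg (fun t => t.1.length) h
    simp at this
    ext; omega
  · rintro ⟨t, ht⟩
    refine ⟨⟨t.length, seqLT_length ht⟩, ?_⟩
    apply Subtype.ext
    exact (List.prefix_iff_eq_take.1 ht.1).symm

/-- The tree built from a coding of the points by infinite sequences. -/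
def mkTree {X : Type u} (Φ : X → (ℕ → ℕ)) : FoliageTree X where
  Node := List ℕ
  lt := seqLT
  lt_irrefl a h := h.2 rfl
  lt_trans {a b c} h1 h2 := ⟨h1.1.trans h2.1, fun e => by
    have := seqLT_length h1
    have := seqLT_length h2
    rw [e] at *; omega⟩
  wellOrdered a := by
    have h1 : WellFounded (fun x y : {b : List ℕ // seqLT b a} => seqLT x.1 y.1) :=
      Subrelation.wf (fun {x y} h => seqLT_length h)
        (InvImage.wf (fun x : {b : List ℕ // seqLT b a} => x.1.length) Nat.lt_wfRel.wf)
    have h2 : ∀ x y : {b : List ℕ // seqLT b a}, ¬ seqLT x.1 y.1 → ¬ seqLT y.1 x.1 → x = y := by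
      rintro ⟨x, hx⟩ ⟨y, hy⟩ h1 h2
      rcases seq_tri hx hy with h | h | h
      · exact absurd h h1
      · exact Subtype.ext h
      · exact absurd h h2
    exact { trichotomous := h2, wf := h1 }
  leaf s := {q | pre (Φ q) s.length = s}

theorem mkTree_sons {X : Type u} (Φ : X → (ℕ → ℕ)) (s : List ℕ) :
    (mkTree Φ).Sons s = {t : List ℕ | ∃ k, t = s ++ [k]} := by
  ext t
  exact seq_sons s t

theorem mkTree_piTree {X : Type u} [TopologicalSpace X] (Φ : X ≃ (ℕ → ℕ)) (hc : Continuous Φ)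
    (hg : ∀ p : X, ∀ U ∈ nhds p, ∃ n K, ∀ q, (∀ i < n, Φ q i = Φ p i) → K ≤ Φ q n → q ∈ U) :
    (mkTree Φ).IsPiTree := by
  refine ⟨⟨?_, ?_, ⟨RelIso.refl _⟩, ⟨⟨([] : List ℕ)⟩, ?_⟩, ([] : List ℕ), ?_, ?_⟩, ?_⟩
  · intro (s : List ℕ)
    have h1 : Continuous (fun q => (fun i : Fin s.length => Φ q i)) := by fun_prop
    have h2 : (mkTree Φ).leaf s = (fun q => (fun i : Fin s.length => Φ q i)) ⁻¹'
        {f | List.ofFn f = s} := by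
      ext q
      have : pre (Φ q) s.length = List.ofFn (fun i : Fin s.length => Φ q i) := by
        apply List.ext_getElem <;> simp [pre]
      change pre (Φ q) s.length = s ↔ List.ofFn (fun i : Fin s.length => Φ q i) = s
      rw [this]
    rw [h2]
    exact (isOpen_discrete _).preimage h1
  · intro (s : List ℕ) _
    erw [mkTree_sons]
    constructor
    · ext q
      simp only [Set.mem_iUnion, mkTree, Set.mem_ofPred_eq]
      constructor
      · intro h
        exact ⟨s ++ [Φ q s.length], ⟨_, rfl⟩, by
          simp only [List.length_append, List.length_singleton, pre_succ]; rw [h]⟩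
      · rintro ⟨_, ⟨k, rfl⟩, h⟩
        simp only [List.length_append, List.length_singleton, pre_succ] at h
        exact (List.append_inj' h rfl).1
    · rintro _ ⟨k, rfl⟩ _ ⟨l, rfl⟩ hne
      rw [Set.disjoint_left]
      intro q h1 h2
      apply hne
      simp only [mkTree, Set.mem_ofPred_eq, List.length_append, List.length_singleton] at h1 h2
      rw [← h1, ← h2]
  · intro B hB
    obtain ⟨x, rfl⟩ := branch_pre B hB.1 hB.2
    refine ⟨Φ.symm x, ?_⟩
    ext q
    simp only [Set.mem_iInter, Set.mem_singleton_iff, mkTree, Set.mem_ofPred_eq]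
    constructor
    · intro h
      rw [Equiv.eq_symm_apply]
      funext i
      have := h (pre x (i+1)) ⟨_, rfl⟩
      rw [pre_length, pre_eq_iff] at this
      exact this i (Nat.lt_succ_self i)
    · rintro rfl _ ⟨n, rfl⟩
      simp [pre_length]
  · intro s
    by_cases h : ([] : List ℕ) = s
    · exact Or.inl h
    · exact Or.inr ⟨List.nil_prefix, h⟩
  · ext q; simp [mkTree, pre]
  · intro p U hU
    obtain ⟨n, K, h⟩ := hg p U hU
    refine ⟨pre (Φ p) n, ?_, ?_⟩
    · change pre (Φ p) (pre (Φ p) n).length = pre (Φ p) n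
      rw [pre_length]
    · rintro D rfl _
      refine ⟨_, ⟨{t : List ℕ | ∃ k, K ≤ k ∧ t = pre (Φ p) n ++ [k]}, ?_, ?_, rfl⟩, ?_, ?_⟩
      · rw [mkTree_sons]
        rintro _ ⟨k, _, rfl⟩
        exact ⟨k, rfl⟩
      · rw [mkTree_sons]
        apply ((Set.finite_Iio K).image (fun k => pre (Φ p) n ++ [k])).subset
        rintro _ ⟨⟨k, rfl⟩, h2⟩
        refine ⟨k, ?_, rfl⟩
        by_contra hk
        exact h2 ⟨k, not_lt.1 hk, rfl⟩
      · refine ⟨Φ.symm (Function.update (Φ p) n K), ?_⟩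
        simp only [Set.mem_iUnion]
        refine ⟨pre (Φ p) n ++ [K], ⟨K, le_rfl, rfl⟩, ?_⟩
        simp only [mkTree, Set.mem_ofPred_eq, List.length_append, List.length_singleton,
          pre_length, pre_succ, Equiv.apply_symm_apply, Function.update_self]
        congr 1
        rw [pre_eq_iff]
        intro i hi
        exact Function.update_of_ne hi.ne _ _
      · intro q hq
        simp only [Set.mem_iUnion] at hq
        obtain ⟨_, ⟨k, hk, rfl⟩, hq⟩ := hq
        simp only [mkTree, Set.mem_ofPred_eq, List.length_append, List.length_singleton,
          pre_length, pre_succ] at hq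
        have h1 := List.append_inj' hq rfl
        refine h q ((pre_eq_iff _ _ _).1 h1.1) ?_
        have := h1.2
        simp at this
        omega

end PiProd

namespace PiProd

theorem height_eq {X : Type u} (F : FoliageTree X) (φ : F.lt ≃r seqLT) (v : F.Node) :
    F.height v = ((φ v).length : Ordinal) := by
  obtain ⟨e⟩ := seq_card (φ v)
  have e2 : {b : F.Node // F.lt b v} ≃ {t : List ℕ // seqLT t (φ v)} :=
    φ.toEquiv.subtypeEquiv (fun b => (φ.map_rel_iff (a := b) (b := v)).symm)
  have hc : (F.height v).card = ((φ v).length : Cardinal) := by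
    unfold FoliageTree.height
    rw [Ordinal.card_type, Cardinal.mk_congr (e2.trans e.symm)]
    simp
  exact Ordinal.card_eq_nat.1 hc

theorem mem_sons {X : Type u} (F : FoliageTree X) (φ : F.lt ≃r seqLT) (s : List ℕ) (w : F.Node) :
    w ∈ F.Sons (φ.symm s) ↔ ∃ k, w = φ.symm (s ++ [k]) := by
  have h1 : w ∈ F.Sons (φ.symm s) ↔
      (seqLT s (φ w) ∧ ¬ ∃ r, seqLT s r ∧ seqLT r (φ w)) := by
    change (F.lt (φ.symm s) w ∧ ¬ ∃ t, F.lt (φ.symm s) t ∧ F.lt t w) ↔ _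
    have a1 : ∀ t, F.lt (φ.symm s) t ↔ seqLT s (φ t) := by
      intro t; rw [← φ.map_rel_iff]; simp
    have a2 : ∀ t u, F.lt t u ↔ seqLT (φ t) (φ u) := by
      intro t u; rw [← φ.map_rel_iff]
    rw [a1]
    refine and_congr_right fun _ => not_congr ⟨?_, ?_⟩
    · rintro ⟨t, h1, h2⟩
      exact ⟨φ t, (a1 t).1 h1, (a2 _ _).1 h2⟩
    · rintro ⟨r, h1, h2⟩
      exact ⟨φ.symm r, (a1 _).2 (by simpa using h1), (a2 _ _).2 (by simpa using h2)⟩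
  rw [h1, seq_sons]
  refine exists_congr fun k => ?_
  constructor
  · intro h; rw [← h]; simp
  · intro h; rw [h]; simp

theorem extract {X : Type u} [TopologicalSpace X] (F : FoliageTree X) (hF : F.IsPiTree) :
    ∃ Φ : X ≃ (ℕ → ℕ), Continuous Φ ∧
      (∀ p : X, ∀ U ∈ nhds p, ∀ n ∈ F.rise p U,
        ∃ K, ∀ q, (∀ i < n, Φ q i = Φ p i) → K ≤ Φ q n → q ∈ U) ∧
      (∀ p : X, ∀ U ∈ nhds p, (F.rise p U).Nonempty) := by
  obtain ⟨⟨hopen, hls, ⟨φ⟩, ⟨-, hbr⟩, r, hr, hru⟩, hg⟩ := hF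
  set L : List ℕ → Set X := fun s => F.leaf (φ.symm s) with hL
  have hroot : L [] = Set.univ := by
    rw [← hru]
    have : φ.symm [] = r := by
      rcases hr (φ.symm []) with h | h
      · exact h.symm
      · have h2 := φ.map_rel_iff.2 h
        have := seqLT_length h2
        simp at this
    simp only [hL, this]
  have hnm : ∀ s, ¬ F.IsMaxNode (φ.symm s) := by
    intro s h
    refine h ⟨φ.symm (s ++ [0]), ?_⟩
    have := ((mem_sons F φ s (φ.symm (s ++ [0]))).2 ⟨0, rfl⟩)
    exact this.1
  have hsplit : ∀ s q, q ∈ L s ↔ ∃ k, q ∈ L (s ++ [k]) := by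
    intro s q
    simp only [hL]
    rw [(hls _ (hnm s)).1]
    simp only [Set.mem_iUnion]
    constructor
    · rintro ⟨w, hw, hq⟩
      obtain ⟨k, rfl⟩ := (mem_sons F φ s w).1 hw
      exact ⟨k, hq⟩
    · rintro ⟨k, hq⟩
      exact ⟨_, (mem_sons F φ s _).2 ⟨k, rfl⟩, hq⟩
  have hdisj : ∀ s q k l, q ∈ L (s ++ [k]) → q ∈ L (s ++ [l]) → k = l := by
    intro s q k l h1 h2
    by_contra hne
    have := (hls _ (hnm s)).2 _ ((mem_sons F φ s _).2 ⟨k, rfl⟩) _ ((mem_sons F φ s _).2 ⟨l, rfl⟩)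
      (by intro e; apply hne; simpa using φ.symm.injective e)
    exact Set.disjoint_left.1 this h1 h2
  have hbranch : ∀ x : ℕ → ℕ, ∃ p, ∀ q, (∀ n, q ∈ L (pre x n)) ↔ q = p := by
    intro x
    obtain ⟨p, hp⟩ := hbr {v | ∃ n, v = φ.symm (pre x n)} (by
      constructor
      · rintro _ ⟨m, rfl⟩ _ ⟨n, rfl⟩
        rw [← φ.map_rel_iff, ← φ.map_rel_iff]
        simpa using pre_chain x m n
      · intro C hC hsub
        apply Set.Subset.antisymm hsub
        intro v hv
        obtain ⟨n, hn⟩ := pre_branch x (φ '' C) (by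
          rintro _ ⟨a, ha, rfl⟩ _ ⟨b, hb, rfl⟩
          rcases hC a ha b hb with h | h | h
          · exact Or.inl (φ.map_rel_iff.2 h)
          · exact Or.inr (Or.inl (by rw [h]))
          · exact Or.inr (Or.inr (φ.map_rel_iff.2 h)))
          (fun n => ⟨φ.symm (pre x n), hsub ⟨n, rfl⟩, by simp⟩) (φ v) ⟨v, hv, rfl⟩
        exact ⟨n, by rw [← hn]; simp⟩)
    refine ⟨p, fun q => ?_⟩
    have : q ∈ (⋂ v ∈ {v | ∃ n, v = φ.symm (pre x n)}, F.leaf v) ↔ q = p := by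
      rw [hp]; rfl
    rw [← this]
    simp only [Set.mem_iInter]
    constructor
    · rintro h _ ⟨n, rfl⟩
      exact h n
    · intro h n
      exact h _ ⟨n, rfl⟩
  choose g hgp using hbranch
  -- the code of each point
  have hcode : ∀ p, ∃ x : ℕ → ℕ, ∀ n, p ∈ L (pre x n) := by
    intro p
    have hstep : ∀ s : {s : List ℕ // p ∈ L s}, ∃ k, p ∈ L (s.1 ++ [k]) :=
      fun s => (hsplit s.1 p).1 s.2
    choose c hc using hstep
    let S : ℕ → {s : List ℕ // p ∈ L s} := fun n =>
      Nat.rec ⟨[], by rw [hroot]; trivial⟩ (fun _ s => ⟨s.1 ++ [c s], hc s⟩) n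
    refine ⟨fun n => c (S n), fun n => ?_⟩
    have : pre (fun n => c (S n)) n = (S n).1 := by
      induction n with
      | zero => simp [pre_zero, S]
      | succ n ih => rw [pre_succ, ih]
    rw [this]
    exact (S n).2
  choose f hf using hcode
  have huniq : ∀ p x n, p ∈ L (pre x n) → pre x n = pre (f p) n := by
    intro p x n
    induction n with
    | zero => intro _; simp [pre_zero]
    | succ n ih =>
      intro h
      rw [pre_succ] at h
      have h1 := ih ((hsplit _ _).2 ⟨_, h⟩)
      have h2 := hf p (n+1)
      rw [pre_succ, ← h1] at h2
      rw [pre_succ, pre_succ, ← h1, hdisj _ _ _ _ h h2]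
  let Φ : X ≃ (ℕ → ℕ) :=
    { toFun := f
      invFun := g
      left_inv := fun p => ((hgp (f p) p).1 (hf p)).symm
      right_inv := fun x => by
        funext i
        have h := (hgp x (g x)).2 rfl (i+1)
        exact ((pre_eq_iff _ _ _).1 (huniq _ _ _ h) i (Nat.lt_succ_self i)).symm }
  have hΦ : ∀ p, Φ p = f p := fun _ => rfl
  have hmem : ∀ p s, p ∈ L s ↔ pre (Φ p) s.length = s := by
    intro p s
    rw [hΦ]
    constructor
    · intro h
      have hs : s = pre (fun i => s.getD i 0) s.length := by
        apply List.ext_getElem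
        · rw [pre_length]
        · intro i h1 h2; simp [pre, h1]
      have h2 := huniq p (fun i => s.getD i 0) s.length (by rw [← hs]; exact h)
      rw [← h2, ← hs]
    · intro h; rw [← h]; exact hf p _
  refine ⟨Φ, ?_, ?_, ?_⟩
  · refine continuous_pi fun i => ?_
    rw [continuous_discrete_rng]
    intro c
    rw [isOpen_iff_mem_nhds]
    intro p hp
    refine Filter.mem_of_superset ((hopen (φ.symm (pre (Φ p) (i+1)))).mem_nhds
      ((hmem p _).2 (by rw [pre_length]))) ?_
    intro q hq
    have h1 := (hmem q _).1 hq
    rw [pre_length, pre_eq_iff] at h1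
    have h2 := h1 i (Nat.lt_succ_self i)
    change Φ q i = c
    rw [h2]; exact hp
  · rintro p U hU n ⟨v, hv, hvU, hn⟩
    obtain ⟨S, ⟨C, hCs, hCf, rfl⟩, -, hSU⟩ := hvU U rfl ⟨p, mem_of_mem_nhds hU⟩
    have hvφ : φ.symm (φ v) = v := by simp
    have hlen : (φ v).length = n := by
      have := height_eq F φ v
      rw [hn] at this
      exact_mod_cast this.symm
    have hpv : pre (Φ p) n = φ v := by
      have := (hmem p (φ v)).1 (by simp only [hL, hvφ]; exact hv)
      rwa [hlen] at this
    have hfin : {k | φ.symm (φ v ++ [k]) ∉ C}.Finite := by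
      have hinj : Function.Injective (fun k => φ.symm (φ v ++ [k])) := by
        intro k l h
        simpa using φ.symm.injective h
      refine (hCf.preimage hinj.injOn).subset ?_
      intro k hk
      refine ⟨?_, hk⟩
      have := (mem_sons F φ (φ v) (φ.symm (φ v ++ [k]))).2 ⟨k, rfl⟩
      rwa [hvφ] at this
    obtain ⟨K, hK⟩ := hfin.bddAbove
    refine ⟨K + 1, fun q hq hqn => hSU ?_⟩
    simp only [Set.mem_iUnion]
    refine ⟨φ.symm (φ v ++ [Φ q n]), ?_, ?_⟩
    · by_contra hcon
      have : Φ q n ≤ K := hK hcon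
      omega
    · apply (hmem q _).2
      rw [List.length_append, hlen, List.length_singleton, pre_succ, ← hpv,
        (pre_eq_iff _ _ _).2 hq]
  · intro p U hU
    obtain ⟨z, hz, h⟩ := hg p U hU
    exact ⟨(φ z).length, z, hz, h, height_eq F φ z⟩

theorem pseudo {X : Type u} [TopologicalSpace X] (F : FoliageTree X) (hF : F.IsPiTree)
    (hγ : ∃ γ : Set (Set ℕ), γ.Countable ∧ HasFIP γ ∧ PiRefines γ F.Rise) :
    ∃ (Φ : X ≃ (ℕ → ℕ)) (d : ℕ → ℕ), Continuous Φ ∧ (∀ i, d i + 2 ≤ d (i + 1)) ∧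
      ∀ p : X, ∀ U ∈ nhds p, ∀ᶠ i in Filter.atTop,
        ∃ K, ∀ q, (∀ j < d i, Φ q j = Φ p j) → K ≤ Φ q (d i) → q ∈ U := by
  obtain ⟨Φ, hc, hr, hne⟩ := extract F hF
  obtain ⟨γ, hγc, hfip, href⟩ := hγ
  have hbig : ∀ m, ∃ G ∈ γ, ∀ n ∈ G, m ≤ n := by
    intro m
    set p := Φ.symm 0 with hp
    set U : Set X := {q | ∀ i < m, Φ q i = Φ p i} with hUdef
    have hU : U ∈ nhds p := by
      have h1 : Continuous (fun q => (fun i : Fin m => Φ q i)) := by fun_prop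
      have h2 : IsOpen ((fun q => (fun i : Fin m => Φ q i)) ⁻¹' {fun i : Fin m => Φ p i}) :=
        (isOpen_discrete _).preimage h1
      refine Filter.mem_of_superset (h2.mem_nhds rfl) ?_
      intro q hq i hi
      exact congrFun hq ⟨i, hi⟩
    obtain ⟨G, hG, -, hGs⟩ := href _ ⟨p, U, hU, rfl⟩ (hne p U hU)
    refine ⟨G, hG, fun n hn => ?_⟩
    by_contra hlt
    push Not at hlt
    obtain ⟨K, hK⟩ := hr p U hU n (hGs hn)
    have h3 := hK (Φ.symm (Function.update (Φ p) n (K + Φ p n + 1))) (by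
      intro i hi
      simp [Function.update_of_ne hi.ne]) (by simp; omega)
    have h4 := h3 n hlt
    simp at h4
    omega
  have hγne : γ.Nonempty := by
    obtain ⟨G, hG, -⟩ := hbig 0
    exact ⟨G, hG⟩
  obtain ⟨g, hg⟩ := hγc.exists_eq_range hγne
  have hstep : ∀ i N, ∃ n, N ≤ n ∧ ∀ k ≤ i, n ∈ g k := by
    intro i N
    obtain ⟨G, hG, hGN⟩ := hbig N
    obtain ⟨n, hn⟩ := hfip (insert G (g '' Set.Iic i)) (by
      rintro _ (rfl | ⟨k, _, rfl⟩)
      · exact hG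
      · rw [hg]; exact ⟨k, rfl⟩) (((Set.finite_Iic i).image g).insert G) ⟨G, Set.mem_insert _ _⟩
    refine ⟨n, hGN n (hn G (Set.mem_insert _ _)), fun k hk => hn _ ?_⟩
    exact Set.mem_insert_of_mem _ ⟨k, hk, rfl⟩
  choose f hf1 hf2 using hstep
  let d : ℕ → ℕ := fun n => Nat.rec (f 0 0) (fun i x => f (i+1) (x + 2)) n
  have hd : ∀ i, ∀ k ≤ i, d i ∈ g k := by
    intro i
    cases i with
    | zero => exact hf2 0 0
    | succ i => exact hf2 (i+1) (d i + 2)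
  refine ⟨Φ, d, hc, fun i => hf1 (i+1) (d i + 2), ?_⟩
  intro p U hU
  obtain ⟨G, hG, -, hGs⟩ := href _ ⟨p, U, hU, rfl⟩ (hne p U hU)
  rw [hg] at hG
  obtain ⟨k, rfl⟩ := hG
  filter_upwards [Filter.eventually_ge_atTop k] with i hi
  exact hr p U hU (d i) (hGs (hd i k hi))

end PiProd

namespace PiProd

theorem block_equiv (J : Type) [Finite J] [Nontrivial J] :
    ∃ E : (J → ℕ) ≃ ℕ × ℕ, ∀ f j, (E f).1 ≤ f j := by
  classical
  let μ : (J → ℕ) → ℕ := fun f => sInf (Set.range f)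
  have hμ : ∀ f j, μ f ≤ f j := fun f j => Nat.sInf_le ⟨j, rfl⟩
  have hfib : ∀ m, Nonempty ({f // μ f = m} ≃ ℕ) := by
    intro m
    obtain ⟨j0, j1, hj⟩ := exists_pair_ne J
    have hinf : Infinite {f // μ f = m} := by
      refine Infinite.of_injective
        (fun k : ℕ => (⟨fun j => if j = j0 then m else m + k, ?_⟩ : {f // μ f = m})) ?_
      · apply le_antisymm
        · exact Nat.sInf_le ⟨j0, by simp⟩
        · apply le_csInf (Set.range_nonempty_iff_nonempty.2 ⟨j0⟩)
          rintro _ ⟨j, rfl⟩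
          dsimp only
          split_ifs <;> omega
      · intro k l h
        have h2 := congrFun (congrArg Subtype.val h) j1
        simpa [hj.symm] using h2
    exact nonempty_equiv_of_countable
  let e := fun m => (hfib m).some
  refine ⟨(Equiv.sigmaFiberEquiv μ).symm.trans
    ((Equiv.sigmaCongrRight e).trans (Equiv.sigmaEquivProd ℕ ℕ)), fun f j => ?_⟩
  exact hμ f j

/-- Interleaving. -/
def flat : (ℕ → ℕ × ℕ) ≃ (ℕ → ℕ) where
  toFun g n := if n % 2 = 0 then (g (n / 2)).1 else (g (n / 2)).2
  invFun x i := (x (2 * i), x (2 * i + 1))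
  left_inv g := by
    funext i
    have h1 : (2 * i + 1) / 2 = i := by omega
    have h2 : (2 * i + 1) % 2 = 1 := by omega
    simp [h1, h2]
  right_inv x := by
    funext n
    dsimp only
    split_ifs with h
    · congr 1; omega
    · congr 1; omega

theorem flat_even (g : ℕ → ℕ × ℕ) (i : ℕ) : flat g (2 * i) = (g i).1 := by
  simp [flat]

theorem flat_odd (g : ℕ → ℕ × ℕ) (i : ℕ) : flat g (2 * i + 1) = (g i).2 := by
  have h1 : (2 * i + 1) / 2 = i := by omega
  have h2 : (2 * i + 1) % 2 = 1 := by omega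
  simp [flat, h1, h2]

/-- Splitting a function along the fibres of `σ`. -/
def splitFib {C : Type} (σ : C → ℕ) : (C → ℕ) ≃ (∀ i, {c // σ c = i} → ℕ) where
  toFun f i c := f c.1
  invFun g c := g (σ c) ⟨c, rfl⟩
  left_inv f := rfl
  right_inv g := by
    funext i c
    obtain ⟨c, rfl⟩ := c
    rfl

theorem exists_inj (A : Type) [Countable A] (a0 : A) :
    ∃ e : A → ℕ, Function.Injective e ∧ e a0 = 0 := by
  obtain ⟨e, he⟩ := exists_injective_nat A
  exact ⟨fun a => Equiv.swap (e a0) 0 (e a), (Equiv.injective _).comp he, by simp⟩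

theorem stage (A : Type) [Countable A] [Nonempty A] (d : A → ℕ → ℕ)
    (hd : ∀ a i, d a i + 2 ≤ d a (i + 1)) :
    ∃ σ : A × ℕ → ℕ, (∀ i, Finite {c // σ c = i}) ∧ (∀ i, Nontrivial {c // σ c = i}) ∧
      ∀ a, ∀ᶠ i in Filter.atTop, σ (a, d a i) = i ∧ ∀ j < d a i, σ (a, j) < i := by
  classical
  obtain ⟨a0⟩ := ‹Nonempty A›
  obtain ⟨e, he, he0⟩ := exists_inj A a0
  have hmono : ∀ a, StrictMono (d a) := fun a =>
    strictMono_nat_of_lt_succ (fun i => by have := hd a i; omega)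
  have hex : ∀ c : A × ℕ, ∃ i, e c.1 ≤ i ∧ c.2 < d c.1 (i + 1) := by
    rintro ⟨a, j⟩
    refine ⟨max (e a) j, le_max_left _ _, ?_⟩
    have h1 := (hmono a).le_apply (x := max (e a) j + 1)
    have h2 := le_max_right (e a) j
    dsimp only
    omega
  let σ : A × ℕ → ℕ := fun c => Nat.find (hex c)
  have hσ : ∀ c, e c.1 ≤ σ c ∧ c.2 < d c.1 (σ c + 1) := fun c => Nat.find_spec (hex c)
  have hσle : ∀ c i, e c.1 ≤ i → c.2 < d c.1 (i + 1) → σ c ≤ i :=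
    fun c i h1 h2 => Nat.find_min' (hex c) ⟨h1, h2⟩
  have hσeq : ∀ a i j, e a ≤ i → d a i ≤ j → j < d a (i + 1) → σ (a, j) = i := by
    intro a i j h1 h2 h3
    apply le_antisymm (hσle (a, j) i h1 h3)
    by_contra hlt
    push Not at hlt
    have h4 := (hσ (a, j)).2
    have h5 : d a (σ (a, j) + 1) ≤ d a i := (hmono a).monotone hlt
    dsimp only at h4
    omega
  refine ⟨σ, ?_, ?_, ?_⟩
  · intro i
    have hfA : {a | e a ≤ i}.Finite := (Set.finite_Iic i).preimage he.injOn
    have : {c | σ c = i} ⊆ ⋃ a ∈ {a | e a ≤ i}, (fun j => (a, j)) '' Set.Iio (d a (i + 1)) := by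
      rintro ⟨a, j⟩ hc
      have h := hσ (a, j)
      rw [show σ (a, j) = i from hc] at h
      simp only [Set.mem_iUnion]
      exact ⟨a, h.1, j, h.2, rfl⟩
    exact ((hfA.biUnion fun a _ => (Set.finite_Iio _).image _).subset this).to_subtype
  · intro i
    have h := hd a0 i
    refine ⟨⟨(a0, d a0 i), hσeq a0 i _ (by omega) le_rfl (by omega)⟩,
      ⟨(a0, d a0 i + 1), hσeq a0 i _ (by omega) (by omega) (by omega)⟩, ?_⟩
    intro hh
    simp at hh
  · intro a
    filter_upwards [Filter.eventually_gt_atTop (e a)] with i hi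
    refine ⟨hσeq a i _ hi.le le_rfl (by have := hd a i; omega), fun j hj => ?_⟩
    obtain ⟨i', rfl⟩ : ∃ i', i = i' + 1 := ⟨i - 1, by omega⟩
    have := hσle (a, j) i' (by dsimp only; omega) hj
    omega

end PiProd

/-- Theorem 2(a) of the paper. -/
theorem product_has_piTree_of_countable_FIP_refinements
    {A : Type} [Countable A] [Nonempty A]
    {X : A → Type u} [∀ a, TopologicalSpace (X a)]
    (F : ∀ a, FoliageTree (X a)) (hF : ∀ a, (F a).IsPiTree)
    (hγ : ∀ a, ∃ γ : Set (Set ℕ), γ.Countable ∧ HasFIP γ ∧ PiRefines γ ((F a).Rise)) :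
    ∃ G : FoliageTree (∀ a, X a), G.IsPiTree := by
  choose Φ d hc hd hg using fun a => PiProd.pseudo (F a) (hF a) (hγ a)
  obtain ⟨σ, hσf, hσn, hσ⟩ := PiProd.stage A d hd
  choose E hE using fun i => PiProd.block_equiv {c // σ c = i}
  let Ψ : (∀ a, X a) ≃ (ℕ → ℕ) :=
    (Equiv.piCongrRight Φ).trans ((Equiv.curry A ℕ ℕ).symm.trans
      ((PiProd.splitFib σ).trans ((Equiv.piCongrRight E).trans PiProd.flat)))
  let R : ∀ i, (∀ a, X a) → {c // σ c = i} → ℕ := fun i q c => Φ c.1.1 (q c.1.1) c.1.2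
  have hΨ : ∀ q, Ψ q = PiProd.flat (fun i => E i (R i q)) := fun q => rfl
  have hRc : ∀ i, Continuous (R i) := by
    intro i
    refine continuous_pi fun c => ?_
    have h1 : Continuous (fun x => Φ c.1.1 x c.1.2) :=
      (continuous_apply c.1.2).comp (hc c.1.1)
    exact h1.comp (continuous_apply c.1.1)
  refine ⟨PiProd.mkTree Ψ, PiProd.mkTree_piTree Ψ ?_ ?_⟩
  · refine continuous_pi fun n => ?_
    have h1 : Continuous (fun r : {c // σ c = n / 2} → ℕ =>
        if n % 2 = 0 then (E (n / 2) r).1 else (E (n / 2) r).2) :=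
      continuous_of_discreteTopology
    exact h1.comp (hRc (n / 2))
  · intro p U hU
    rw [nhds_pi, Filter.mem_pi] at hU
    obtain ⟨I, hI, t, ht, htU⟩ := hU
    have hev : ∀ᶠ i in Filter.atTop, ∀ a ∈ I,
        (σ (a, d a i) = i ∧ ∀ j < d a i, σ (a, j) < i) ∧
        ∃ K, ∀ q, (∀ j < d a i, Φ a q j = Φ a (p a) j) → K ≤ Φ a q (d a i) → q ∈ t a := by
      rw [Filter.eventually_all_finite hI]
      intro a _
      exact (hσ a).and (hg a (p a) (t a) (ht a))
    obtain ⟨i, hi⟩ := hev.exists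
    have hK : ∀ a, ∃ K, a ∈ I → ∀ q, (∀ j < d a i, Φ a q j = Φ a (p a) j) →
        K ≤ Φ a q (d a i) → q ∈ t a := by
      intro a
      by_cases ha : a ∈ I
      · obtain ⟨K, hK⟩ := (hi a ha).2
        exact ⟨K, fun _ => hK⟩
      · exact ⟨0, fun h => absurd h ha⟩
    choose K hK using hK
    obtain ⟨M, hM⟩ := (hI.image K).bddAbove
    refine ⟨2 * i, M, fun q hq hqM => htU ?_⟩
    intro a ha
    refine hK a ha (q a) ?_ ?_
    · intro j hj
      have hlt := (hi a ha).1.2 j hj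
      have h1 := hq (2 * σ (a, j)) (by omega)
      have h2 := hq (2 * σ (a, j) + 1) (by omega)
      rw [hΨ, hΨ, PiProd.flat_even, PiProd.flat_even] at h1
      rw [hΨ, hΨ, PiProd.flat_odd, PiProd.flat_odd] at h2
      have h3 := (E (σ (a, j))).injective (Prod.ext h1 h2)
      exact congrFun h3 ⟨(a, j), rfl⟩
    · have h1 : K a ≤ M := hM ⟨a, ha, rfl⟩
      rw [hΨ, PiProd.flat_even] at hqM
      have h2 := hE i (R i q) ⟨(a, d a i), (hi a ha).1.1⟩
      exact (h1.trans hqM).trans h2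
end

section
/- Suppose that for every α in an index set A with 1 ≤ |A| ≤ ω, F(α) is a π-tree on a topological space X_α, and for each α ∈ A there is a family γ_α of subsets of ω such that |γ_α| ≤ ω, γ_α has the finite intersection property, and γ_α ≫ Rise_{F(α)}(X_α). Suppose in addition that G is a π-tree on a space Y and Rise_G(Y) has the finite intersection property. Then the product space Y × ∏_{α∈A} X_α has a π-tree. -/
open Set

universe u v

namespace PiTreeAux

/-- The prefix of length `n` of an infinite sequence. -/
def pre (f : ℕ → ℕ) (n : ℕ) : List ℕ := (List.range n).map f

lemma pre_length (f : ℕ → ℕ) (n : ℕ) : (pre f n).length = n := by simp [pre]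

lemma pre_succ (f : ℕ → ℕ) (n : ℕ) : pre f (n+1) = pre f n ++ [f n] := by
  simp [pre, List.range_succ]

lemma pre_getElem (f : ℕ → ℕ) (n i : ℕ) (h : i < (pre f n).length) : (pre f n)[i] = f i := by
  simp [pre]

lemma pre_eq_iff (f g : ℕ → ℕ) (n : ℕ) : pre f n = pre g n ↔ ∀ i < n, f i = g i := by
  simp [pre]

lemma eq_pre (l : List ℕ) : l = pre (fun i => l.getD i 0) l.length := by
  apply List.ext_getElem
  · simp [pre_length]
  · intro i h1 h2
    rw [pre_getElem]; simp [h1]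

lemma pre_prefix (f : ℕ → ℕ) {m n : ℕ} (h : m ≤ n) : pre f m <+: pre f n := by
  induction n, h using Nat.le_induction with
  | base => exact List.prefix_refl _
  | succ n h ih => rw [pre_succ]; exact ih.trans (List.prefix_append _ _)

lemma prefix_pre {f : ℕ → ℕ} {n : ℕ} {l : List ℕ} (h : l <+: pre f n) : l = pre f l.length := by
  have h1 := h.length_le
  rw [pre_length] at h1
  have h2 := pre_prefix f h1
  have h3 := List.prefix_of_prefix_length_le h h2 (by simp [pre_length])
  exact h3.eq_of_length (by simp [pre_length])

lemma seqLT_length {a b : List ℕ} (h : seqLT a b) : a.length < b.length := by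
  rcases lt_or_eq_of_le h.1.length_le with h1 | h1
  · exact h1
  · exact absurd (h.1.eq_of_length h1) h.2

lemma seqLT_append (l : List ℕ) (k : ℕ) : seqLT l (l ++ [k]) := by
  refine ⟨List.prefix_append _ _, fun h => ?_⟩
  have := congrArg List.length h
  simp at this

lemma seqLT_son {l t : List ℕ} (h : seqLT l t) : ∃ k, l ++ [k] <+: t := by
  obtain ⟨⟨r, rfl⟩, h2⟩ := h
  cases r with
  | nil => simp at h2
  | cons k r => exact ⟨k, by simp⟩

lemma son_iff (l s : List ℕ) :
    (seqLT l s ∧ ¬ ∃ t, seqLT l t ∧ seqLT t s) ↔ ∃ k, s = l ++ [k] := by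
  constructor
  · rintro ⟨h1, h2⟩
    obtain ⟨k, hk⟩ := seqLT_son h1
    refine ⟨k, ?_⟩
    by_contra hne
    exact h2 ⟨_, seqLT_append l k, hk, fun h => hne h.symm⟩
  · rintro ⟨k, rfl⟩
    refine ⟨seqLT_append l k, ?_⟩
    rintro ⟨t, h1, h2⟩
    have := seqLT_length h1
    have := seqLT_length h2
    simp at this
    omega

lemma seqLT_trans {a b c : List ℕ} (h : seqLT a b) (h' : seqLT b c) : seqLT a c := by
  refine ⟨h.1.trans h'.1, fun e => ?_⟩
  have := seqLT_length h
  have := seqLT_length h'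
  subst e; omega

lemma seqLT_wo (a : List ℕ) :
    IsWellOrder {b : List ℕ // seqLT b a} (fun x y => seqLT x.1 y.1) where
  trichotomous := by
    rintro ⟨x, hx⟩ ⟨y, hy⟩ h1 h2
    simp only [seqLT] at h1 h2
    rcases List.prefix_or_prefix_of_prefix hx.1 hy.1 with h | h
    · by_contra hne
      exact h1 ⟨h, fun e => hne (Subtype.ext e)⟩
    · by_contra hne
      exact h2 ⟨h, fun e => hne (Subtype.ext e.symm)⟩
  wf := Subrelation.wf (r := InvImage (· < ·) (fun x : {b : List ℕ // seqLT b a} => x.1.length))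
    (fun h => seqLT_length h) (InvImage.wf _ Nat.lt_wfRel.wf)

/-- The good set of levels of a coding. -/
def good {X : Type u} (φ : X → ℕ → ℕ) (p : X) (U : Set X) : Set ℕ :=
  {n | ∃ m, ∀ x, (∀ i < n, φ x i = φ p i) → m ≤ φ x n → x ∈ U}

lemma card_pred (l : List ℕ) : Nonempty ({b : List ℕ // seqLT b l} ≃ Fin l.length) := by
  refine ⟨Equiv.ofBijective (fun b => ⟨b.1.length, seqLT_length b.2⟩) ⟨?_, ?_⟩⟩
  · rintro ⟨a, ha⟩ ⟨b, hb⟩ h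
    simp only [Fin.mk.injEq] at h
    apply Subtype.ext
    exact (List.prefix_of_prefix_length_le ha.1 hb.1 h.le).eq_of_length h
  · rintro ⟨n, hn⟩
    refine ⟨⟨l.take n, List.take_prefix _ _, fun e => ?_⟩, ?_⟩
    · have := congrArg List.length e
      simp at this; omega
    · simp; omega

lemma height_eq {X : Type u} (F : FoliageTree X) (ψ : F.lt ≃r seqLT) (v : F.Node) :
    F.height v = ((ψ v).length : Ordinal) := by
  rw [← Ordinal.card_eq_nat]
  obtain ⟨e⟩ := card_pred (ψ v)
  unfold FoliageTree.height
  letI := F.wellOrdered v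
  rw [Ordinal.card_type]
  have e2 : {b : F.Node // F.lt b v} ≃ Fin (ψ v).length :=
    (ψ.toEquiv.subtypeEquiv (fun b => by exact ψ.map_rel_iff.symm)).trans e
  rw [Cardinal.mk_congr e2]; simp

theorem code_of_piTree {X : Type u} [TopologicalSpace X] (F : FoliageTree X) (hF : F.IsPiTree) :
    ∃ φ : X ≃ (ℕ → ℕ), (∀ i k, IsOpen {x | φ x i = k}) ∧
      (∀ p, ∀ U ∈ nhds p, F.rise p U ⊆ good φ p U) ∧
      (∀ p, ∀ U ∈ nhds p, (F.rise p U).Nonempty) := by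
  obtain ⟨⟨hO, hL, ⟨ψ⟩, ⟨-, hB⟩, r, hr, hru⟩, hG⟩ := hF
  set lf : List ℕ → Set X := fun l => F.leaf (ψ.symm l) with hlf
  have hsons : ∀ l s, s ∈ F.Sons (ψ.symm l) ↔ ∃ k, s = ψ.symm (l ++ [k]) := by
    intro l s
    have h0 : s ∈ F.Sons (ψ.symm l) ↔ (seqLT l (ψ s) ∧ ¬ ∃ t, seqLT l t ∧ seqLT t (ψ s)) := by
      have e1 : ∀ x y, F.lt x y ↔ seqLT (ψ x) (ψ y) := fun x y => ψ.map_rel_iff.symm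
      simp only [FoliageTree.Sons, mem_setOf_eq, e1, RelIso.apply_symm_apply]
      rw [ψ.surjective.exists]
    rw [h0, son_iff]
    constructor
    · rintro ⟨k, hk⟩; exact ⟨k, by rw [← hk]; simp⟩
    · rintro ⟨k, rfl⟩; exact ⟨k, by simp⟩
  have hmax : ∀ l, ¬ F.IsMaxNode (ψ.symm l) := by
    intro l h
    have : ψ.symm (l ++ [0]) ∈ F.Sons (ψ.symm l) := (hsons _ _).2 ⟨0, rfl⟩
    exact h ⟨_, this.1⟩
  have hnext : ∀ l x, x ∈ lf l → ∃ k, x ∈ lf (l ++ [k]) := by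
    intro l x hx
    have hx' : x ∈ F.leaf (ψ.symm l) := hx
    rw [(hL _ (hmax l)).1] at hx'
    simp only [mem_iUnion] at hx'
    obtain ⟨s, hs, hxs⟩ := hx'
    obtain ⟨k, rfl⟩ := (hsons _ _).1 hs
    exact ⟨k, hxs⟩
  have hback : ∀ l k, lf (l ++ [k]) ⊆ lf l := by
    intro l k x hx
    show x ∈ F.leaf (ψ.symm l)
    rw [(hL _ (hmax l)).1]
    simp only [mem_iUnion]
    exact ⟨_, (hsons _ _).2 ⟨k, rfl⟩, hx⟩
  have hdisj : ∀ l k k' x, x ∈ lf (l ++ [k]) → x ∈ lf (l ++ [k']) → k = k' := by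
    intro l k k' x h1 h2
    by_contra hne
    have := (hL _ (hmax l)).2 _ ((hsons _ _).2 ⟨k, rfl⟩) _ ((hsons _ _).2 ⟨k', rfl⟩)
      (fun e => hne (by simpa using ψ.symm.injective e))
    exact Set.disjoint_left.1 this h1 h2
  have hroot : ∀ x, x ∈ lf [] := by
    intro x
    have : ψ.symm [] = r := by
      rcases hr (ψ.symm []) with h | h
      · exact h.symm
      · have h2 := ψ.map_rel_iff.2 h
        have := seqLT_length h2
        simp at this
    show x ∈ F.leaf (ψ.symm [])
    rw [this, hru]; trivial
  -- points of branches
  have hpt : ∀ f : ℕ → ℕ, ∃ p, ∀ x, (∀ n, x ∈ lf (pre f n)) ↔ x = p := by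
    intro f
    have hbr : F.IsBranch (range fun n => ψ.symm (pre f n)) := by
      have hch : F.IsChainN (range fun n => ψ.symm (pre f n)) := by
        rintro _ ⟨m, rfl⟩ _ ⟨n, rfl⟩
        have aux : ∀ m n, m < n → F.lt (ψ.symm (pre f m)) (ψ.symm (pre f n)) := by
          intro m n hmn
          rw [ψ.symm.map_rel_iff]
          refine ⟨pre_prefix f hmn.le, fun e => ?_⟩
          have := congrArg List.length e
          simp [pre_length] at this; omega
        rcases lt_trichotomy m n with h | h | h
        · exact Or.inl (aux _ _ h)
        · subst h; exact Or.inr (Or.inl rfl)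
        · exact Or.inr (Or.inr (aux _ _ h))
      refine ⟨hch, fun C hC hsub => subset_antisymm hsub fun c hc => ?_⟩
      have h1 := hC c hc _ (hsub ⟨(ψ c).length + 1, rfl⟩)
      have h2 : ψ c <+: pre f ((ψ c).length + 1) := by
        rcases h1 with h | h | h
        · have := ψ.map_rel_iff.2 h
          rw [RelIso.apply_symm_apply] at this
          exact this.1
        · have := congrArg (fun x => (ψ x).length) h
          simp [pre_length] at this
        · have := ψ.map_rel_iff.2 h
          rw [RelIso.apply_symm_apply] at this
          have := seqLT_length this
          simp [pre_length] at this
      exact ⟨(ψ c).length, by simp only []; rw [← prefix_pre h2]; simp⟩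
    obtain ⟨p, hp⟩ := hB _ hbr
    refine ⟨p, fun x => ?_⟩
    have : x ∈ (⋂ y ∈ (range fun n => ψ.symm (pre f n)), F.leaf y) ↔ x = p := by rw [hp]; rfl
    rw [← this]
    simp [hlf]
  choose pt hpt using hpt
  have hseq : ∀ x, ∃ f : ℕ → ℕ, ∀ n, x ∈ lf (pre f n) := by
    intro x
    have : ∀ l, ∃ k, x ∈ lf l → x ∈ lf (l ++ [k]) := by
      intro l
      by_cases h : x ∈ lf l
      · obtain ⟨k, hk⟩ := hnext l x h; exact ⟨k, fun _ => hk⟩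
      · exact ⟨0, fun h' => absurd h' h⟩
    choose g hg using this
    let L : ℕ → List ℕ := fun n => Nat.rec [] (fun _ l => l ++ [g l]) n
    have hLs : ∀ n, L (n+1) = L n ++ [g (L n)] := fun n => rfl
    have hpre : ∀ n, pre (fun n => g (L n)) n = L n := by
      intro n
      induction n with
      | zero => rfl
      | succ n ih => rw [pre_succ, ih, hLs]
    refine ⟨fun n => g (L n), fun n => ?_⟩
    rw [hpre]
    induction n with
    | zero => exact hroot x
    | succ n ih => rw [hLs]; exact hg _ ih
  have huniq : ∀ x f g n, x ∈ lf (pre f n) → x ∈ lf (pre g n) → pre f n = pre g n := by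
    intro x f g n
    induction n with
    | zero => intros; rfl
    | succ n ih =>
      intro h1 h2
      rw [pre_succ] at h1 h2
      have := ih (hback _ _ h1) (hback _ _ h2)
      rw [pre_succ, pre_succ, this]
      rw [this] at h1
      rw [hdisj _ _ _ _ h1 h2]
  have hbij : Function.Bijective pt := by
    constructor
    · intro f g h
      funext i
      have h1 := (hpt f (pt f)).2 rfl (i+1)
      have h2 := (hpt g (pt f)).2 h (i+1)
      exact (pre_eq_iff _ _ _).1 (huniq _ _ _ _ h1 h2) i (Nat.lt_succ_self i)
    · intro x
      obtain ⟨f, hf⟩ := hseq x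
      exact ⟨f, ((hpt f x).1 hf).symm⟩
  let φ : X ≃ (ℕ → ℕ) := (Equiv.ofBijective pt hbij).symm
  have hφ : ∀ x n, x ∈ lf (pre (φ x) n) := by
    intro x
    apply (hpt (φ x) x).2
    exact ((Equiv.ofBijective pt hbij).apply_symm_apply x).symm
  have hmem : ∀ x l, x ∈ lf l → l = pre (φ x) l.length := by
    intro x l h
    conv_lhs => rw [eq_pre l]
    apply huniq x
    · rw [← eq_pre]; exact h
    · exact hφ _ _
  refine ⟨φ, ?_, ?_, ?_⟩
  · intro i k
    have : {x | φ x i = k} = ⋃ l ∈ {l : List ℕ | l.length = i}, lf (l ++ [k]) := by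
      ext x
      simp only [mem_setOf_eq, mem_iUnion, exists_prop]
      constructor
      · intro h
        refine ⟨pre (φ x) i, pre_length _ _, ?_⟩
        have := hφ x (i+1)
        rwa [pre_succ, h] at this
      · rintro ⟨l, hl, hx⟩
        have h1 := hmem _ _ hx
        rw [List.length_append, hl] at h1
        simp only [List.length_cons, List.length_nil, zero_add] at h1
        rw [pre_succ] at h1
        have := List.append_inj_right' h1 rfl
        simpa using this.symm
    rw [this]
    exact isOpen_biUnion fun l _ => hO _
  · rintro p U hU n ⟨v, hv, hs, hh⟩
    rw [height_eq F ψ v] at hh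
    have hn : (ψ v).length = n := by exact_mod_cast hh
    have hvl : v = ψ.symm (ψ v) := by simp
    have hl : ψ v = pre (φ p) n := by
      rw [← hn]; apply hmem
      show p ∈ F.leaf (ψ.symm (ψ v))
      rw [← hvl]; exact hv
    obtain ⟨S, ⟨C, hC, hfin, rfl⟩, -, hSU⟩ := hs U rfl ⟨p, mem_of_mem_nhds hU⟩
    have hfin2 : {k : ℕ | ψ.symm (ψ v ++ [k]) ∈ F.Sons v \ C}.Finite := by
      apply hfin.preimage
      intro a _ b _ h
      have := ψ.symm.injective h
      simpa using this
    obtain ⟨m, hm⟩ := hfin2.bddAbove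
    refine ⟨m+1, fun x hx hmx => ?_⟩
    apply hSU
    have hx1 : pre (φ x) n = ψ v := by rw [hl]; exact (pre_eq_iff _ _ _).2 hx
    have hx2 := hφ x (n+1)
    rw [pre_succ, hx1] at hx2
    simp only [mem_iUnion]
    refine ⟨_, ?_, hx2⟩
    by_contra hnC
    have hson : ψ.symm (ψ v ++ [φ x n]) ∈ F.Sons v := by
      rw [hvl, hsons]; simp
    have := hm (show φ x n ∈ _ from ⟨hson, hnC⟩)
    omega
  · intro p U hU
    obtain ⟨z, hz, hs⟩ := hG p U hU
    exact ⟨_, z, hz, hs, height_eq F ψ z⟩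

theorem piTree_of_code {Z : Type u} [TopologicalSpace Z] (φ : Z ≃ (ℕ → ℕ))
    (ho : ∀ i k, IsOpen {x | φ x i = k})
    (hg : ∀ p, ∀ U ∈ nhds p, (good φ p U).Nonempty) :
    ∃ H : FoliageTree Z, H.IsPiTree := by
  let H : FoliageTree Z :=
    { Node := List ℕ
      lt := seqLT
      lt_irrefl := fun a h => h.2 rfl
      lt_trans := fun h h' => seqLT_trans h h'
      wellOrdered := seqLT_wo
      leaf := fun l => {z | pre (φ z) l.length = l} }
  have hsons : ∀ l s : List ℕ, s ∈ H.Sons l ↔ ∃ k, s = l ++ [k] := fun l s => son_iff l s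
  have hleaf : ∀ (l : List ℕ) z, z ∈ H.leaf l ↔ pre (φ z) l.length = l := fun l z => Iff.rfl
  have hleafs : ∀ (l : List ℕ) k z, z ∈ H.leaf (l ++ [k]) ↔ z ∈ H.leaf l ∧ φ z l.length = k := by
    intro l k z
    show pre (φ z) (l ++ [k]).length = l ++ [k] ↔ pre (φ z) l.length = l ∧ _
    have hlen : (l ++ [k]).length = l.length + 1 := by simp
    rw [hlen, pre_succ]
    constructor
    · intro h
      exact ⟨List.append_inj_left' h rfl, by simpa using List.append_inj_right' h rfl⟩
    · rintro ⟨h1, h2⟩; rw [h1, h2]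
  refine ⟨H, ⟨?_, ?_, ⟨RelIso.refl _⟩, ⟨⟨([] : List ℕ)⟩, ?_⟩, ([] : List ℕ), ?_, ?_⟩, ?_⟩
  · intro l
    change List ℕ at l
    have : H.leaf l = ⋂ i ∈ Finset.range l.length, {x | φ x i = l.getD i 0} := by
      ext z
      rw [hleaf]
      conv_lhs => rhs; rw [eq_pre l]
      rw [pre_eq_iff]
      simp
    rw [this]
    exact isOpen_biInter_finset fun i _ => ho _ _
  · intro l _
    change List ℕ at l
    constructor
    · ext z
      simp only [mem_iUnion]
      constructor
      · intro h
        exact ⟨l ++ [φ z l.length], (hsons _ _).2 ⟨_, rfl⟩, (hleafs _ _ _).2 ⟨h, rfl⟩⟩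
      · rintro ⟨s, hs, hz⟩
        obtain ⟨k, rfl⟩ := (hsons _ _).1 hs
        exact ((hleafs _ _ _).1 hz).1
    · intro s hs t ht hne
      obtain ⟨k, rfl⟩ := (hsons _ _).1 hs
      obtain ⟨k', rfl⟩ := (hsons _ _).1 ht
      rw [Set.disjoint_left]
      intro z h1 h2
      apply hne
      rw [← ((hleafs _ _ _).1 h1).2, ← ((hleafs _ _ _).1 h2).2]
  · intro B hB
    change Set (List ℕ) at B
    classical
    have hpref : ∀ a ∈ B, ∀ b ∈ B, a <+: b ∨ b <+: a := by
      intro a ha b hb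
      rcases hB.1 a ha b hb with h | h | h
      · exact Or.inl h.1
      · subst h; exact Or.inl (List.prefix_refl _)
      · exact Or.inr h.1
    have hex : ∀ i, ∃ k, ∀ l ∈ B, i < l.length → l.getD i 0 = k := by
      intro i
      by_cases h : ∃ l ∈ B, i < l.length
      · obtain ⟨l, hl, hi⟩ := h
        refine ⟨l.getD i 0, fun l' hl' hi' => ?_⟩
        rcases hpref l hl l' hl' with h | h <;> obtain ⟨r, rfl⟩ := h
        · simp [List.getElem?_append, hi]
        · simp [List.getElem?_append, hi']
      · push Not at h
        exact ⟨0, fun l hl hi => absurd hi (not_lt.2 (h l hl))⟩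
    choose f hf using hex
    have hBf : ∀ l ∈ B, l = pre f l.length := by
      intro l hl
      conv_lhs => rw [eq_pre l]
      rw [pre_eq_iff]
      intro i hi
      exact hf i l hl hi
    have hBeq : B = range (pre f) := by
      apply hB.2
      · rintro _ ⟨m, rfl⟩ _ ⟨n, rfl⟩
        have aux : ∀ m n, m < n → seqLT (pre f m) (pre f n) := by
          intro m n hmn
          refine ⟨pre_prefix f hmn.le, fun e => ?_⟩
          have := congrArg List.length e
          simp [pre_length] at this; omega
        rcases lt_trichotomy m n with h | h | h
        · exact Or.inl (aux _ _ h)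
        · subst h; exact Or.inr (Or.inl rfl)
        · exact Or.inr (Or.inr (aux _ _ h))
      · intro l hl; exact ⟨_, (hBf l hl).symm⟩
    refine ⟨φ.symm f, ?_⟩
    ext z
    simp only [mem_iInter, mem_singleton_iff]
    constructor
    · intro h
      rw [Equiv.eq_symm_apply]
      funext i
      have h1 := h (pre f (i+1)) (by rw [hBeq]; exact ⟨_, rfl⟩)
      rw [hleaf, pre_length] at h1
      exact (pre_eq_iff _ _ _).1 h1 i (Nat.lt_succ_self i)
    · rintro rfl l hl
      rw [hleaf, Equiv.apply_symm_apply]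
      exact (hBf l hl).symm
  · intro x
    change List ℕ at x
    cases x with
    | nil => exact Or.inl rfl
    | cons a l => exact Or.inr ⟨List.nil_prefix, by simp⟩
  · ext z; simp [hleaf, pre]
  · intro p U hU
    obtain ⟨n, m, hm⟩ := hg p U hU
    refine ⟨pre (φ p) n, ?_, ?_⟩
    · show pre (φ p) (pre (φ p) n).length = _
      rw [pre_length]
    · rintro _ rfl -
      refine ⟨_, ⟨{s | ∃ k, m ≤ k ∧ s = pre (φ p) n ++ [k]}, ?_, ?_, rfl⟩, ?_, ?_⟩
      · rintro s ⟨k, -, rfl⟩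
        exact (hsons _ _).2 ⟨k, rfl⟩
      · apply ((Set.finite_lt_nat m).image fun k => pre (φ p) n ++ [k]).subset
        rintro s ⟨h1, h2⟩
        obtain ⟨k, rfl⟩ := (hsons _ _).1 h1
        refine ⟨k, ?_, rfl⟩
        by_contra hk
        exact h2 ⟨k, not_lt.1 hk, rfl⟩
      · refine ⟨φ.symm (Function.update (φ p) n m), ?_⟩
        simp only [mem_iUnion]
        refine ⟨pre (φ p) n ++ [m], ⟨m, le_rfl, rfl⟩, ?_⟩
        rw [hleafs, hleaf, pre_length, pre_eq_iff]
        simp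
        intro i hi
        rw [Function.update_of_ne hi.ne]
      · intro z hz
        simp only [mem_iUnion] at hz
        obtain ⟨s, ⟨k, hk, rfl⟩, hz⟩ := hz
        rw [hleafs, hleaf, pre_length, pre_eq_iff] at hz
        exact hm z hz.1 (hz.2 ▸ hk)

lemma exists_split {D : Type} [Countable D] (μ : D → ℕ) (h : ∀ k, {d | μ d = k}.Infinite) :
    ∃ ε : D ≃ ℕ × ℕ, ∀ d, (ε d).1 = μ d := by
  have : ∀ k, Nonempty ({d // μ d = k} ≃ ℕ) := by
    intro k
    haveI : Infinite {d // μ d = k} := (h k).to_subtype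
    obtain ⟨e⟩ := nonempty_denumerable {d // μ d = k}
    exact ⟨Denumerable.eqv _⟩
  let e := fun k => (this k).some
  refine ⟨(Equiv.sigmaFiberEquiv μ).symm.trans
    ((Equiv.sigmaCongrRight e).trans (Equiv.sigmaEquivProd ℕ ℕ)), fun d => rfl⟩

/-- Interleaving. -/
def interleave : (ℕ → ℕ × ℕ) ≃ (ℕ → ℕ) where
  toFun g j := if j % 2 = 0 then (g (j/2)).1 else (g (j/2)).2
  invFun h n := (h (2*n), h (2*n+1))
  left_inv g := by
    funext n
    have h1 : (2*n+1)/2 = n := by omega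
    have h2 : (2*n+1)%2 = 1 := by omega
    simp [h1, h2]
  right_inv h := by
    funext j
    by_cases hj : j % 2 = 0
    · simp only [hj, if_true]; congr 1; omega
    · simp only [hj, if_false]; congr 1; omega

lemma combine {I : Type} (st : I → ℕ) (hfin : ∀ n, {i | st i = n}.Finite) (Q : Set I)
    (hQ : ∀ n, ∃ q ∈ Q, st q = n ∧ ∃ i, i ≠ q ∧ st i = n) :
    ∃ Θ : (I → ℕ) ≃ (ℕ → ℕ),
      (∀ k a b, (∀ i, st i ≤ k → a i = b i) → Θ a k = Θ b k) ∧
      (∀ n a b, (∀ j < 2*n, Θ a j = Θ b j) → ∀ i, st i < n → a i = b i) ∧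
      (∀ n a q, q ∈ Q → st q = n → Θ a (2*n) ≤ a q) := by
  classical
  let μ : ∀ n, ({i // st i = n} → ℕ) → ℕ := fun n d => sInf (d '' {q | q.1 ∈ Q})
  have hε : ∀ n, ∃ ε : ({i // st i = n} → ℕ) ≃ ℕ × ℕ, ∀ d, (ε d).1 = μ n d := by
    intro n
    haveI : Finite {i // st i = n} := (hfin n).to_subtype
    apply exists_split
    intro k
    obtain ⟨q, hq, hqn, i, hne, hi⟩ := hQ n
    let w : ℕ → ({i // st i = n} → ℕ) := fun t j => if j.1 = i then k + t else k
    have hw : Function.Injective w := by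
      intro t t' h
      have := congrFun h ⟨i, hi⟩
      simpa [w] using this
    apply (Set.infinite_range_of_injective hw).mono
    rintro _ ⟨t, rfl⟩
    show sInf _ = k
    apply le_antisymm
    · apply Nat.sInf_le
      exact ⟨⟨q, hqn⟩, hq, by simp [w, hne.symm]⟩
    · apply le_csInf
      · exact ⟨_, ⟨q, hqn⟩, hq, rfl⟩
      · rintro _ ⟨j, -, rfl⟩
        simp only [w]; split_ifs <;> omega
  choose ε hε using hε
  let Ψ : (I → ℕ) ≃ (∀ n, {i // st i = n} → ℕ) :=
    { toFun := fun a n i => a i.1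
      invFun := fun d i => d (st i) ⟨i, rfl⟩
      left_inv := fun a => rfl
      right_inv := fun d => by
        funext n ⟨i, hi⟩
        subst hi; rfl }
  refine ⟨(Ψ.trans (Equiv.piCongrRight ε)).trans interleave, ?_, ?_, ?_⟩
  · intro k a b hab
    have : Ψ a (k/2) = Ψ b (k/2) := by
      funext ⟨i, hi⟩
      exact hab i (by omega)
    simp [interleave, this]
  · intro n a b hab i hi
    have h1 := hab (2 * st i) (by omega)
    have h2 := hab (2 * st i + 1) (by omega)
    have e1 : (2*st i+1)/2 = st i := by omega
    have e2 : (2*st i+1)%2 = 1 := by omega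
    simp [interleave, e1, e2] at h1 h2
    have h3 : Ψ a (st i) = Ψ b (st i) := (ε _).injective (Prod.ext h1 h2)
    exact congrFun h3 ⟨i, rfl⟩
  · intro n a q hq hqn
    simp only [interleave, Equiv.trans_apply, Equiv.coe_fn_mk, Equiv.piCongrRight_apply,
      Nat.mul_mod_right, if_true, Pi.map_apply]
    have : 2 * n / 2 = n := by omega
    rw [this, hε]
    exact Nat.sInf_le ⟨⟨q, hqn⟩, hq, rfl⟩

lemma cyl_nhds {X : Type u} [TopologicalSpace X] (φ : X ≃ (ℕ → ℕ))
    (ho : ∀ i k, IsOpen {x | φ x i = k}) (p : X) (m : ℕ) :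
    {x | ∀ i < m, φ x i = φ p i} ∈ nhds p := by
  have : {x | ∀ i < m, φ x i = φ p i} = ⋂ i ∈ Finset.range m, {x | φ x i = φ p i} := by
    ext; simp
  rw [this]
  exact (isOpen_biInter_finset fun i _ => ho _ _).mem_nhds (by simp)

lemma good_cyl {X : Type u} (φ : X ≃ (ℕ → ℕ)) (p : X) (m n : ℕ)
    (h : n ∈ good φ p {x | ∀ i < m, φ x i = φ p i}) : m ≤ n := by
  obtain ⟨k, hk⟩ := h
  by_contra hlt
  have := hk (φ.symm (Function.update (φ p) n (max k (φ p n + 1)))) (by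
    intro i hi
    simp [Function.update_of_ne hi.ne]) (by simp) n (by omega)
  simp at this
  omega

lemma good_mono {X : Type u} (φ : X → ℕ → ℕ) (p : X) {U V : Set X} (h : U ⊆ V) :
    good φ p U ⊆ good φ p V := fun _ ⟨m, hm⟩ => ⟨m, fun x h1 h2 => h (hm x h1 h2)⟩

lemma exists_pseudo {X : Type u} [TopologicalSpace X] (F : FoliageTree X)
    (φ : X ≃ (ℕ → ℕ)) (ho : ∀ i k, IsOpen {x | φ x i = k})
    (h1 : ∀ p, ∀ U ∈ nhds p, F.rise p U ⊆ good φ p U)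
    (h2 : ∀ p, ∀ U ∈ nhds p, (F.rise p U).Nonempty)
    (hγ : ∃ γ : Set (Set ℕ), γ.Countable ∧ HasFIP γ ∧ PiRefines γ F.Rise) :
    ∃ s : ℕ → ℕ, StrictMono s ∧ ∀ p, ∀ U ∈ nhds p, ∃ N, ∀ n ≥ N, s n ∈ good φ p U := by
  obtain ⟨γ, hc, hfip, href⟩ := hγ
  have href' : ∀ p, ∀ U ∈ nhds p, ∃ G ∈ γ, G ⊆ good φ p U := by
    intro p U hU
    obtain ⟨G, hG, -, hs⟩ := href _ ⟨p, U, hU, rfl⟩ (h2 p U hU)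
    exact ⟨G, hG, hs.trans (h1 p U hU)⟩
  let p0 : X := φ.symm 0
  have hne : γ.Nonempty := by
    obtain ⟨G, hG, -⟩ := href' p0 univ Filter.univ_mem
    exact ⟨G, hG⟩
  obtain ⟨g, rfl⟩ := hc.exists_eq_range hne
  have hfr : ∀ n, ∃ᶠ k in Filter.atTop, ∀ j ≤ n, k ∈ g j := by
    intro n
    rw [Filter.frequently_atTop]
    intro m
    obtain ⟨G, hG, hGs⟩ := href' p0 _ (cyl_nhds φ ho p0 m)
    obtain ⟨k, hk⟩ := hfip (insert G (g '' {j | j ≤ n}))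
      (by
        apply Set.insert_subset hG
        rintro _ ⟨j, -, rfl⟩; exact ⟨j, rfl⟩)
      (((Set.finite_le_nat n).image g).insert G) ⟨G, by simp⟩
    refine ⟨k, good_cyl φ p0 m k (hGs (hk G (by simp))), fun j hj => ?_⟩
    exact hk _ (Or.inr ⟨j, hj, rfl⟩)
  obtain ⟨s, hs, hsg⟩ := Filter.extraction_forall_of_frequently hfr
  refine ⟨s, hs, fun p U hU => ?_⟩
  obtain ⟨_, ⟨j, rfl⟩, hG⟩ := href' p U hU
  exact ⟨j, fun n hn => hG (hsg n j hn)⟩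

end PiTreeAux

open PiTreeAux in
/-- Theorem 2(b) of the paper. -/
theorem product_with_FIP_piTree_space_has_piTree
    {A : Type} [Countable A] [Nonempty A]
    {X : A → Type u} [∀ a, TopologicalSpace (X a)]
    (F : ∀ a, FoliageTree (X a)) (hF : ∀ a, (F a).IsPiTree)
    (hγ : ∀ a, ∃ γ : Set (Set ℕ), γ.Countable ∧ HasFIP γ ∧ PiRefines γ ((F a).Rise))
    {Y : Type u} [TopologicalSpace Y] (G : FoliageTree Y) (hG : G.IsPiTree)
    (hGFIP : HasFIP G.Rise) :
    ∃ H : FoliageTree (Y × ∀ a, X a), H.IsPiTree := by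
  classical
  obtain ⟨φY, hoY, hY1, hY2⟩ := code_of_piTree G hG
  choose φ ho hX1 hX2 using fun a => code_of_piTree (F a) (hF a)
  choose s hs hsg using fun a => exists_pseudo (F a) (φ a) (ho a) (hX1 a) (hX2 a) (hγ a)
  obtain ⟨e0, he0⟩ := exists_injective_nat A
  obtain ⟨a0⟩ := (inferInstance : Nonempty A)
  let e : A → ℕ := fun a => e0 a - e0 a0
  have hea0 : e a0 = 0 := by simp [e]
  have hefin : ∀ n, {a | e a ≤ n}.Finite := by
    intro n
    apply ((Set.finite_le_nat (n + e0 a0)).preimage he0.injOn).subset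
    intro a ha
    simp only [e, mem_setOf_eq, mem_preimage] at ha ⊢
    omega
  have hti : ∀ a i, ∃ n, i < s a (n+1) := fun a i => ⟨i, (Nat.lt_succ_self i).trans_le ((hs a).id_le _)⟩
  let t : A → ℕ → ℕ := fun a i => Nat.find (hti a i)
  have ht1 : ∀ a i, i < s a (t a i + 1) := fun a i => Nat.find_spec (hti a i)
  have ht2 : ∀ a n, t a (s a n) = n := by
    intro a n
    rw [Nat.find_eq_iff]
    exact ⟨hs a (Nat.lt_succ_self n), fun k hk => not_lt.2 ((hs a).monotone hk)⟩
  have ht3 : ∀ a i n, i < s a (n+1) → t a i ≤ n := fun a i n h => Nat.find_min' _ h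
  let st : ℕ ⊕ A × ℕ → ℕ := Sum.elim id fun x => max (e x.1) (t x.1 x.2)
  let Q : Set (ℕ ⊕ A × ℕ) := {q | (∃ n, q = Sum.inl n) ∨ ∃ a n, e a ≤ n ∧ q = Sum.inr (a, s a n)}
  have hst : ∀ a n, e a ≤ n → st (Sum.inr (a, s a n)) = n := by
    intro a n h
    simp [st, ht2, h]
  have hfin : ∀ n, {i | st i = n}.Finite := by
    intro n
    have hf1 : (Sum.inl '' {n} : Set (ℕ ⊕ A × ℕ)).Finite := (Set.finite_singleton n).image _
    have hf2 : (⋃ a ∈ {a | e a ≤ n}, (fun i => (Sum.inr (a, i) : ℕ ⊕ A × ℕ)) '' {i | i < s a (n+1)}).Finite :=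
      (hefin n).biUnion fun a _ => (Set.finite_lt_nat _).image _
    apply (hf1.union hf2).subset
    rintro (k | ⟨a, i⟩) h
    · left; exact ⟨k, h, rfl⟩
    · right
      have h' : max (e a) (t a i) = n := h
      simp only [mem_iUnion]
      refine ⟨a, ?_, i, ?_, rfl⟩
      · show e a ≤ n
        omega
      · have := ht1 a i
        exact this.trans_le ((hs a).monotone (by omega))
  obtain ⟨Θ, hΘ1, hΘ2, hΘ3⟩ := combine st hfin Q (by
    intro n
    exact ⟨Sum.inl n, Or.inl ⟨n, rfl⟩, rfl, Sum.inr (a0, s a0 n), by simp, hst _ _ (by omega)⟩)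
  let c : (Y × ∀ a, X a) ≃ (ℕ ⊕ A × ℕ → ℕ) :=
    { toFun := fun z => Sum.elim (φY z.1) (fun x => φ x.1 (z.2 x.1) x.2)
      invFun := fun f => (φY.symm fun n => f (Sum.inl n), fun a => (φ a).symm fun n => f (Sum.inr (a, n)))
      left_inv := fun z => by
        refine Prod.ext (φY.symm_apply_apply z.1) (funext fun a => (φ a).symm_apply_apply (z.2 a))
      right_inv := fun f => by
        funext i
        rcases i with n | ⟨a, n⟩ <;> simp }
  have hoc : ∀ i k, IsOpen {z | c z i = k} := by
    rintro (n | ⟨a, n⟩) k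
    · exact (hoY n k).preimage continuous_fst
    · exact (ho a n k).preimage ((continuous_apply a).comp continuous_snd)
  apply piTree_of_code (c.trans Θ)
  · intro j k
    rw [isOpen_iff_mem_nhds]
    intro z hz
    have hJ : {i | st i ≤ j}.Finite := by
      have : {i | st i ≤ j} = ⋃ n ∈ {n | n ≤ j}, {i | st i = n} := by ext; simp
      rw [this]
      exact (Set.finite_le_nat j).biUnion fun n _ => hfin n
    have hop : IsOpen (⋂ i ∈ {i | st i ≤ j}, {z' | c z' i = c z i}) :=
      hJ.isOpen_biInter fun i _ => hoc _ _
    refine Filter.mem_of_superset (hop.mem_nhds (by simp)) fun z' hz' => ?_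
    simp only [mem_iInter, mem_setOf_eq] at hz' hz ⊢
    rw [← hz]
    exact hΘ1 _ _ _ hz'
  · rintro ⟨y, x⟩ U hU
    rw [nhds_prod_eq, Filter.mem_prod_iff] at hU
    obtain ⟨V, hV, W, hW, hVW⟩ := hU
    rw [nhds_pi, Filter.mem_pi] at hW
    obtain ⟨E, hE, T, hT, hTW⟩ := hW
    choose N hN using fun a => hsg a (x a) (T a) (hT a)
    -- a large level
    obtain ⟨M, hM⟩ : ∃ M, ∀ a ∈ E, N a ≤ M ∧ e a < M := by
      obtain ⟨M, hM⟩ := (hE.image fun a => N a + e a + 1).bddAbove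
      refine ⟨M, fun a ha => ?_⟩
      have := hM ⟨a, ha, rfl⟩
      simp only at this
      omega
    have hV' := Filter.inter_mem hV (cyl_nhds φY hoY y M)
    obtain ⟨n, hn⟩ := hY2 y _ hV'
    have hn' := hY1 y _ hV' hn
    have hMn : M ≤ n := good_cyl φY y M n (good_mono _ _ inter_subset_right hn')
    obtain ⟨m0, hm0⟩ := good_mono _ _ inter_subset_left hn'
    have : ∀ a, ∃ m, a ∈ E → ∀ x', (∀ i < s a n, φ a x' i = φ a (x a) i) → m ≤ φ a x' (s a n) → x' ∈ T a := by
      intro a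
      by_cases ha : a ∈ E
      · obtain ⟨m, hm⟩ := hN a n ((hM a ha).1.trans hMn)
        exact ⟨m, fun _ => hm⟩
      · exact ⟨0, fun h => absurd h ha⟩
    choose m hm using this
    obtain ⟨K, hK⟩ := (hE.image m).bddAbove
    refine ⟨2*n, max m0 K, ?_⟩
    rintro ⟨y', x'⟩ hagree hbig
    have hag := hΘ2 n _ _ hagree
    apply hVW
    have hbig' : max m0 K ≤ Θ (c (y', x')) (2*n) := hbig
    refine ⟨?_, hTW ?_⟩
    · apply hm0
      · intro i hi
        exact hag (Sum.inl i) hi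
      · exact ((le_max_left _ _).trans hbig').trans (hΘ3 n _ (Sum.inl n) (Or.inl ⟨n, rfl⟩) rfl)
    · intro a ha
      have hean := (hM a ha).2
      apply hm a ha
      · intro i hi
        refine hag (Sum.inr (a, i)) ?_
        show max (e a) (t a i) < n
        have := ht3 a i (n-1) (by rwa [Nat.sub_add_cancel (by omega)])
        omega
      · refine ((hK ⟨a, ha, rfl⟩).trans ((le_max_right _ _).trans hbig')).trans ?_
        exact hΘ3 n _ (Sum.inr (a, s a n)) (Or.inr ⟨a, n, by omega, rfl⟩) (hst a n (by omega))
end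

section
/- Suppose that F is a Baire foliage tree on a topological space X and A ⊆ X is at most countable. Then there exists a Baire foliage tree H on the subspace X \ A such that for every p ∈ X \ A there is a strictly increasing function f_p : ω → ω with the property: {2n+1 : n ∈ ω and f_p(n) ∈ rise_F(p,U)} ⊆ rise_H(p, U \ A) for every neighbourhood U of p in X. -/
open Set

universe u v

namespace FolAux

/-- Initial segment of length `n` of an infinite sequence. -/
def pre (x : ℕ → ℕ) (n : ℕ) : List ℕ := (List.range n).map x

theorem pre_zero (x : ℕ → ℕ) : pre x 0 = [] := by simp [pre]

theorem pre_succ (x : ℕ → ℕ) (n : ℕ) : pre x (n + 1) = pre x n ++ [x n] := by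
  simp [pre, List.range_succ]

theorem pre_length (x : ℕ → ℕ) (n : ℕ) : (pre x n).length = n := by simp [pre]

theorem pre_prefix (x : ℕ → ℕ) {n m : ℕ} (h : n ≤ m) : pre x n <+: pre x m := by
  induction m, h using Nat.le_induction with
  | base => exact List.prefix_rfl
  | succ m _ ih => rw [pre_succ]; exact ih.trans (List.prefix_append _ _)

theorem chain_pre (S : Set (List ℕ)) (hc : ∀ a ∈ S, ∀ b ∈ S, a <+: b ∨ b <+: a)
    (hu : ∀ n : ℕ, ∃ a ∈ S, n < a.length) : ∃ x : ℕ → ℕ, ∀ a ∈ S, a = pre x a.length := by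
  choose g hgS hg using hu
  refine ⟨fun i => (g i)[i]'(hg i), fun a ha => ?_⟩
  apply List.ext_getElem
  · rw [pre_length]
  · intro i h1 h2
    simp only [pre, List.getElem_map, List.getElem_range]
    rcases hc a ha (g i) (hgS i) with h | h
    · exact h.getElem h1
    · exact (h.getElem (hg i)).symm

theorem eq_of_prefix_length {a b : List ℕ} (h : a <+: b) (hl : b.length ≤ a.length) : a = b :=
  h.eq_of_length_le hl

theorem seqLT_length {a b : List ℕ} (h : seqLT a b) : a.length < b.length := by
  by_contra hh
  exact h.2 (eq_of_prefix_length h.1 (by omega))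

theorem seqLT_of_prefix {a b : List ℕ} (h : a <+: b) (hl : a.length < b.length) : seqLT a b :=
  ⟨h, by rintro rfl; omega⟩

theorem seqLT_append (a : List ℕ) (n : ℕ) : seqLT a (a ++ [n]) :=
  seqLT_of_prefix (List.prefix_append _ _) (by simp)

theorem seqLT_trans {a b c : List ℕ} (h : seqLT a b) (h' : seqLT b c) : seqLT a c :=
  seqLT_of_prefix (h.1.trans h'.1) ((seqLT_length h).trans (seqLT_length h'))

theorem seqLT_son_iff (a s : List ℕ) :
    (seqLT a s ∧ ¬ ∃ t, seqLT a t ∧ seqLT t s) ↔ ∃ n, s = a ++ [n] := by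
  constructor
  · rintro ⟨h, hn⟩
    obtain ⟨r, rfl⟩ := h.1
    match r with
    | [] => exact absurd (by simp) h.2
    | [n] => exact ⟨n, rfl⟩
    | n :: m :: r =>
      exfalso
      apply hn
      refine ⟨a ++ [n], seqLT_append a n, seqLT_of_prefix ⟨m :: r, by simp⟩ (by simp)⟩
  · rintro ⟨n, rfl⟩
    refine ⟨seqLT_append a n, ?_⟩
    rintro ⟨t, h1, h2⟩
    have := seqLT_length h1
    have := seqLT_length h2
    simp at this
    omega

theorem chain_iff {a b : List ℕ} : (seqLT a b ∨ a = b ∨ seqLT b a) ↔ (a <+: b ∨ b <+: a) := by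
  constructor
  · rintro (h | rfl | h)
    · exact Or.inl h.1
    · exact Or.inl List.prefix_rfl
    · exact Or.inr h.1
  · intro h
    by_cases e : a = b
    · exact Or.inr (Or.inl e)
    · rcases h with h | h
      · exact Or.inl ⟨h, e⟩
      · exact Or.inr (Or.inr ⟨h, fun q => e q.symm⟩)

section trees

variable {X : Type u} (F : FoliageTree X) (e : F.lt ≃r seqLT)

theorem mem_sons (v s : F.Node) : s ∈ F.Sons v ↔ ∃ n, s = e.symm (e v ++ [n]) := by
  have h1 : s ∈ F.Sons v ↔ (seqLT (e v) (e s) ∧ ¬ ∃ t, seqLT (e v) t ∧ seqLT t (e s)) := by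
    unfold FoliageTree.Sons
    simp only [mem_ofPred_eq]
    rw [e.map_rel_iff]
    refine and_congr_right fun _ => not_congr ?_
    constructor
    · rintro ⟨t, a, b⟩
      exact ⟨e t, e.map_rel_iff.2 a, e.map_rel_iff.2 b⟩
    · rintro ⟨t, a, b⟩
      refine ⟨e.symm t, ?_, ?_⟩
      · rw [← e.map_rel_iff]; simpa using a
      · rw [← e.map_rel_iff]; simpa using b
  rw [h1, seqLT_son_iff]
  refine exists_congr fun n => ?_
  constructor
  · intro h; rw [← h]; simp
  · intro h; rw [h]; simp

theorem height_eq (v : F.Node) : F.height v = ((e v).length : Ordinal) := by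
  have := F.wellOrdered v
  rw [← Ordinal.type_fin]
  unfold FoliageTree.height
  refine Ordinal.type_eq.2 ⟨?_⟩
  let φ : {b : F.Node // F.lt b v} → Fin (e v).length :=
    fun b => ⟨(e b.1).length, seqLT_length (e.map_rel_iff.2 b.2)⟩
  have comp : ∀ a b : {b : F.Node // F.lt b v}, e a.1 <+: e b.1 ∨ e b.1 <+: e a.1 := fun a b =>
    List.prefix_or_prefix_of_prefix (e.map_rel_iff.2 a.2).1 (e.map_rel_iff.2 b.2).1
  have hb : Function.Bijective φ := by
    constructor
    · intro a b h
      have h' : (e a.1).length = (e b.1).length := congrArg Fin.val h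
      apply Subtype.ext
      apply e.injective
      rcases comp a b with h | h
      · exact eq_of_prefix_length h h'.ge
      · exact (eq_of_prefix_length h h'.le).symm
    · intro i
      refine ⟨⟨e.symm ((e v).take i), ?_⟩, ?_⟩
      · rw [← e.map_rel_iff]
        simp only [RelIso.apply_symm_apply]
        exact seqLT_of_prefix (List.take_prefix _ _) (by simp)
      · apply Fin.ext
        simp [φ]
  refine ⟨Equiv.ofBijective φ hb, ?_⟩
  intro a b
  change (e a.1).length < (e b.1).length ↔ F.lt a.1 b.1
  rw [← e.map_rel_iff]
  constructor
  · intro h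
    rcases comp a b with h' | h'
    · exact seqLT_of_prefix h' h
    · have := h'.length_le; omega
  · exact seqLT_length

theorem mem_shoot (v : F.Node) (S : Set X) : S ∈ F.shoot v ↔
    ∃ D : Set ℕ, Dᶜ.Finite ∧ S = ⋃ n ∈ D, F.leaf (e.symm (e v ++ [n])) := by
  have inj : Function.Injective fun n : ℕ => e.symm (e v ++ [n]) := by
    intro a b h
    have := e.symm.injective h
    simpa using this
  constructor
  · rintro ⟨C, hC, hf, rfl⟩
    refine ⟨(fun n : ℕ => e.symm (e v ++ [n])) ⁻¹' C, ?_, ?_⟩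
    · refine (hf.preimage inj.injOn).subset ?_
      intro n hn
      exact ⟨(mem_sons F e _ _).2 ⟨n, rfl⟩, hn⟩
    · ext p
      simp only [mem_iUnion, mem_preimage, exists_prop]
      constructor
      · rintro ⟨s, hs, hp⟩
        obtain ⟨n, rfl⟩ := (mem_sons F e _ _).1 (hC hs)
        exact ⟨n, hs, hp⟩
      · rintro ⟨n, hs, hp⟩
        exact ⟨_, hs, hp⟩
  · rintro ⟨D, hD, rfl⟩
    refine ⟨(fun n : ℕ => e.symm (e v ++ [n])) '' D, ?_, ?_, ?_⟩
    · rintro _ ⟨n, _, rfl⟩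
      exact (mem_sons F e _ _).2 ⟨n, rfl⟩
    · refine (hD.image (fun n : ℕ => e.symm (e v ++ [n]))).subset ?_
      rintro s ⟨hs, hs'⟩
      obtain ⟨n, rfl⟩ := (mem_sons F e _ _).1 hs
      exact ⟨n, fun h => hs' ⟨n, h, rfl⟩, rfl⟩
    · simp

theorem chainN_iff (B : Set F.Node) : F.IsChainN B ↔
    ∀ x ∈ B, ∀ y ∈ B, e x <+: e y ∨ e y <+: e x := by
  unfold FoliageTree.IsChainN
  refine forall₂_congr fun x _ => forall₂_congr fun y _ => ?_
  rw [← chain_iff, e.map_rel_iff, e.map_rel_iff, e.injective.eq_iff]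

theorem preChain (x : ℕ → ℕ) : F.IsChainN (range fun n => e.symm (pre x n)) := by
  rw [chainN_iff F e]
  rintro _ ⟨n, rfl⟩ _ ⟨m, rfl⟩
  simp only [RelIso.apply_symm_apply]
  rcases le_total n m with h | h
  · exact Or.inl (pre_prefix x h)
  · exact Or.inr (pre_prefix x h)

theorem preBranch (x : ℕ → ℕ) : F.IsBranch (range fun n => e.symm (pre x n)) := by
  refine ⟨preChain F e x, fun C hC hs => hs.antisymm ?_⟩
  intro c hc
  rw [chainN_iff F e] at hC
  refine ⟨(e c).length, ?_⟩
  have := hC c hc _ (hs ⟨(e c).length, rfl⟩)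
  simp only [RelIso.apply_symm_apply] at this
  have h : pre x (e c).length = e c := by
    rcases this with h | h
    · exact (eq_of_prefix_length h (by rw [pre_length])).symm
    · exact eq_of_prefix_length h (by rw [pre_length])
  simp [h]

theorem branch_pre (B : Set F.Node) (hB : F.IsBranch B) :
    ∃ x, B = range fun n => e.symm (pre x n) := by
  have hc := (chainN_iff F e B).1 hB.1
  have hu : ∀ n : ℕ, ∃ a ∈ B, n < (e a).length := by
    by_contra! hh
    obtain ⟨N, hN⟩ := hh
    -- an upper bound of the chain
    have hub : ∃ l : List ℕ, ∀ a ∈ B, e a <+: l := by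
      rcases B.eq_empty_or_nonempty with h0 | h0
      · exact ⟨[], by simp [h0]⟩
      · have hfin : ((fun a => (e a).length) '' B).Finite :=
          (Set.finite_Iic N).subset (by rintro _ ⟨a, ha, rfl⟩; exact hN a ha)
        obtain ⟨a, ha, hm⟩ := Set.exists_max_image _ id hfin (h0.image _)
        obtain ⟨b, hb, rfl⟩ := ha
        refine ⟨e b, fun a ha => ?_⟩
        have hl : (e a).length ≤ (e b).length := hm _ ⟨a, ha, rfl⟩
        rcases hc a ha b hb with h | h
        · exact h
        · rw [eq_of_prefix_length h hl]
    obtain ⟨l, hl⟩ := hub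
    have hch : F.IsChainN (insert (e.symm (l ++ [0])) B) := by
      rw [chainN_iff F e]
      rintro x (rfl | hx) y (rfl | hy)
      · exact Or.inl List.prefix_rfl
      · right; simpa using (hl y hy).trans (List.prefix_append _ _)
      · left; simpa using (hl x hx).trans (List.prefix_append _ _)
      · exact hc x hx y hy
    have heq := hB.2 _ hch (subset_insert _ _)
    have hmem : e.symm (l ++ [0]) ∈ B := by rw [heq]; exact mem_insert _ _
    have := (hl _ hmem).length_le
    simp at this
  obtain ⟨x, hx⟩ := chain_pre (e '' B)
    (by rintro _ ⟨a, ha, rfl⟩ _ ⟨b, hb, rfl⟩; exact hc a ha b hb)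
    (by intro n; obtain ⟨a, ha, h⟩ := hu n; exact ⟨e a, ⟨a, ha, rfl⟩, h⟩)
  refine ⟨x, hB.2 _ (preChain F e x) ?_⟩
  intro a ha
  refine ⟨(e a).length, ?_⟩
  have := hx _ ⟨a, ha, rfl⟩
  simp [← this]

end trees

/-- A combinatorial version of a Baire foliage tree. -/
structure Sch {X : Type u} (G : List ℕ → Set X) : Prop where
  root : ∀ p, p ∈ G []
  split : ∀ l p, p ∈ G l ↔ ∃ n, p ∈ G (l ++ [n])
  disj : ∀ l p n m, p ∈ G (l ++ [n]) → p ∈ G (l ++ [m]) → n = m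
  branch : ∀ y, ∃ p, ∀ q, (∀ n, q ∈ G (pre y n)) ↔ q = p

theorem sch_of_tree {X : Type u} [TopologicalSpace X] (F : FoliageTree X) (e : F.lt ≃r seqLT)
    (hF : F.IsBaireFoliageTree) : Sch (fun l => F.leaf (e.symm l)) := by
  obtain ⟨_, hls, _, hsb, r, hr, hru⟩ := hF
  have nonmax : ∀ v, ¬ F.IsMaxNode v := by
    intro v h
    apply h
    refine ⟨e.symm (e v ++ [0]), ?_⟩
    rw [← e.map_rel_iff]
    simpa using seqLT_append (e v) 0
  have er : r = e.symm [] := by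
    rcases hr (e.symm []) with h | h
    · exact h
    · rw [← e.map_rel_iff] at h
      have := seqLT_length h
      simp at this
  refine ⟨?_, ?_, ?_, ?_⟩
  · intro p
    rw [← er, hru]; trivial
  · intro l p
    rw [(hls (e.symm l) (nonmax _)).1]
    simp only [mem_iUnion, exists_prop, mem_sons F e]
    simp
  · intro l p n m h1 h2
    by_contra hne
    have := (hls (e.symm l) (nonmax _)).2 (e.symm (l ++ [n]))
      ((mem_sons F e _ _).2 ⟨n, by simp⟩) (e.symm (l ++ [m]))
      ((mem_sons F e _ _).2 ⟨m, by simp⟩) (by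
        intro h
        have := e.symm.injective h
        simp at this
        exact hne this)
    exact Set.disjoint_left.1 this h1 h2
  · intro y
    obtain ⟨p, hp⟩ := hsb.2 _ (preBranch F e y)
    refine ⟨p, fun q => ?_⟩
    have := Set.ext_iff.1 hp q
    simpa using this

/-- The foliage tree on finite sequences with prescribed leaves. -/
def seqTree {X : Type u} (L : List ℕ → Set X) : FoliageTree X where
  Node := List ℕ
  lt := seqLT
  lt_irrefl := fun _ h => h.2 rfl
  lt_trans := fun h h' => seqLT_trans h h'
  wellOrdered := fun a =>
    { wf := Subrelation.wf (r := InvImage (· < ·) fun x : {b // seqLT b a} => x.1.length)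
        (fun h => seqLT_length h) (InvImage.wf _ Nat.lt_wfRel.wf)
      trichotomous := fun x y h1 h2 => by
        apply Subtype.ext
        rcases chain_iff.2 (List.prefix_or_prefix_of_prefix x.2.1 y.2.1) with h | h | h
        · exact absurd h h1
        · exact h
        · exact absurd h h2 }
  leaf := L

/-- The tautological isomorphism. -/
def seqIso {X : Type u} (L : List ℕ → Set X) : (seqTree L).lt ≃r seqLT := RelIso.refl _

theorem baire_of_sch {X : Type u} [TopologicalSpace X] (L : List ℕ → Set X) (hL : Sch L)
    (ho : ∀ l, IsOpen (L l)) : (seqTree L).IsBaireFoliageTree := by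
  have ms : ∀ v s : List ℕ, s ∈ (seqTree L).Sons v ↔ ∃ n, s = v ++ [n] :=
    fun v s => mem_sons (seqTree L) (seqIso L) v s
  refine ⟨ho, ?_, ⟨seqIso L⟩, ⟨⟨([] : List ℕ)⟩, ?_⟩, ([] : List ℕ), ?_, ?_⟩
  · intro (v : List ℕ) _
    constructor
    · ext p
      simp only [mem_iUnion, exists_prop]
      constructor
      · intro h
        obtain ⟨n, hn⟩ := (hL.split v p).1 h
        exact ⟨(v ++ [n] : List ℕ), (ms v _).2 ⟨n, rfl⟩, hn⟩
      · rintro ⟨s, hs, hp⟩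
        obtain ⟨n, rfl⟩ := (ms v s).1 hs
        exact (hL.split v p).2 ⟨n, hp⟩
    · intro s hs t ht hne
      obtain ⟨n, rfl⟩ := (ms v s).1 hs
      obtain ⟨m, rfl⟩ := (ms v t).1 ht
      refine Set.disjoint_left.2 fun p h1 h2 => hne ?_
      rw [hL.disj v p n m h1 h2]
  · intro B hB
    obtain ⟨x, rfl⟩ := branch_pre _ (seqIso L) B hB
    obtain ⟨p, hp⟩ := hL.branch x
    refine ⟨p, ?_⟩
    ext q
    rw [mem_singleton_iff, ← hp q]
    simp only [mem_iInter, forall_mem_range]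
    rfl
  · intro x
    by_cases h : ([] : List ℕ) = x
    · exact Or.inl h
    · exact Or.inr ⟨List.nil_prefix, h⟩
  · exact eq_univ_of_forall hL.root

namespace Sch

variable {X : Type u} {G : List ℕ → Set X}

theorem mono (hG : Sch G) {l l' : List ℕ} (h : l <+: l') : G l' ⊆ G l := by
  obtain ⟨r, rfl⟩ := h
  induction r using List.reverseRecOn with
  | nil => simp
  | append_singleton r n ih =>
    intro p hp
    apply ih
    rw [← List.append_assoc] at hp
    exact (hG.split _ _).2 ⟨n, hp⟩

theorem uniq (hG : Sch G) {p : X} (n : ℕ) : ∀ {l l' : List ℕ}, p ∈ G l → p ∈ G l' → l.length = n →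
    l'.length = n → l = l' := by
  induction n with
  | zero =>
    intro l l' _ _ h h'
    rw [List.length_eq_zero_iff] at h h'
    rw [h, h']
  | succ n ih =>
    intro l l' hp hp' h h'
    rcases List.eq_nil_or_concat l with rfl | ⟨s, a, rfl⟩
    · simp at h
    rcases List.eq_nil_or_concat l' with rfl | ⟨s', a', rfl⟩
    · simp at h'
    simp only [List.concat_eq_append, List.length_append, List.length_singleton,
      Nat.add_right_cancel_iff] at *
    have : s = s' := ih ((hG.split _ _).2 ⟨a, hp⟩) ((hG.split _ _).2 ⟨a', hp'⟩) h h'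
    subst this
    rw [hG.disj s p a a' hp hp']

theorem point (hG : Sch G) (p : X) : ∃ y : ℕ → ℕ, (∀ n, p ∈ G (pre y n)) ∧
    ∀ l, p ∈ G l → l = pre y l.length := by
  have hex : ∀ n : ℕ, ∃ l : List ℕ, p ∈ G l ∧ l.length = n := by
    intro n
    induction n with
    | zero => exact ⟨[], hG.root p, rfl⟩
    | succ n ih =>
      obtain ⟨l, hl, hn⟩ := ih
      obtain ⟨m, hm⟩ := (hG.split _ _).1 hl
      exact ⟨l ++ [m], hm, by simp [hn]⟩
  have key : ∀ a b : List ℕ, p ∈ G a → p ∈ G b → a.length ≤ b.length → a <+: b := by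
    intro a b ha hb h
    have h2 : p ∈ G (b.take a.length) := hG.mono (List.take_prefix _ _) hb
    rw [hG.uniq a.length ha h2 rfl (by simp [h])]
    exact List.take_prefix _ _
  obtain ⟨y, hy⟩ := chain_pre {l | p ∈ G l}
    (by
      intro a ha b hb
      rcases le_total a.length b.length with h | h
      · exact Or.inl (key a b ha hb h)
      · exact Or.inr (key b a hb ha h))
    (by
      intro n
      obtain ⟨l, hl, h⟩ := hex (n + 1)
      exact ⟨l, hl, by omega⟩)
  refine ⟨y, fun n => ?_, hy⟩
  obtain ⟨l, hl, h⟩ := hex n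
  have := hy l hl
  rw [h] at this
  rwa [← this]

/-- One step of the construction. -/
theorem step (hG : Sch G) (A : Set X) (ν : X → ℕ) (w : List ℕ) :
    ∃ (c : ℕ → List ℕ) (j : ℕ → ℕ → ℕ),
      (∀ m, w <+: c m) ∧ (∀ m, Function.Injective (j m)) ∧
      (∀ p ∈ G w, p ∉ A → ∃ m k, p ∈ G (c m ++ [j m k])) ∧
      (∀ p m k m' k', p ∈ G (c m ++ [j m k]) → p ∈ G (c m' ++ [j m' k']) → m = m') ∧
      (∀ m k, ∀ x ∈ A, x ∈ G (c m ++ [j m k]) →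
        ∃ a ∈ A, ν a ≤ ν x ∧ a ∈ G w ∧ a ∉ G (c m ++ [j m k])) := by
  by_cases hA : ∃ a ∈ A, a ∈ G w
  · obtain ⟨a, ⟨haA, haw⟩, hmin⟩ : ∃ a, (a ∈ A ∧ a ∈ G w) ∧
        ∀ x, x ∈ A ∧ x ∈ G w → ν a ≤ ν x := by
      have hne : ({x | x ∈ A ∧ x ∈ G w} : Set X).Nonempty := by
        obtain ⟨a, h, h'⟩ := hA
        exact ⟨a, h, h'⟩
      have := WellFounded.has_min (InvImage.wf ν Nat.lt_wfRel.wf) _ hne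
      obtain ⟨a, ha, hm⟩ := this
      exact ⟨a, ha, fun x hx => not_lt.1 (hm x hx)⟩
    obtain ⟨y, hy, hyu⟩ := hG.point a
    have hw := hyu w haw
    set N := w.length with hN
    let j : ℕ → ℕ → ℕ := fun m k => if k < y (N + m) then k else k + 1
    have hj : ∀ m k, j m k ≠ y (N + m) := by
      intro m k
      simp only [j]
      split_ifs <;> omega
    have hwc : ∀ m, w <+: pre y (N + m) := by
      intro m
      rw [hw]
      exact pre_prefix y (by omega)
    refine ⟨fun m => pre y (N + m), j, hwc, ?_, ?_, ?_, ?_⟩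
    · intro m k k' h
      simp only [j] at h
      split_ifs at h <;> omega
    · intro p hp hpA
      have hex : ∃ n, p ∉ G (pre y n) := by
        by_contra! hall
        obtain ⟨q, hq⟩ := hG.branch y
        have h1 := (hq p).1 hall
        have h2 := (hq a).1 hy
        exact hpA (by rw [h1, ← h2]; exact haA)
      classical
      have hf := Nat.find_spec hex
      have hm := fun k => Nat.find_min (m := k) hex
      set n := Nat.find hex
      clear_value n
      have hNn : N < n := by
        by_contra hle
        apply hf
        have : pre y n <+: w := by rw [hw]; exact pre_prefix y (by omega)
        exact hG.mono this hp
      obtain ⟨m, rfl⟩ : ∃ m, n = N + m + 1 := ⟨n - N - 1, by omega⟩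
      have hpm : p ∈ G (pre y (N + m)) := by
        have := hm (N + m) (by omega)
        simpa using this
      obtain ⟨i, hi⟩ := (hG.split _ _).1 hpm
      have hine : i ≠ y (N + m) := by
        rintro rfl
        rw [← pre_succ] at hi
        exact hf hi
      refine ⟨m, if i < y (N + m) then i else i - 1, ?_⟩
      have : j m (if i < y (N + m) then i else i - 1) = i := by
        simp only [j]
        split_ifs <;> omega
      rw [this]
      exact hi
    · have key : ∀ p m k m' k', p ∈ G (pre y (N + m) ++ [j m k]) →
          p ∈ G (pre y (N + m') ++ [j m' k']) → ¬ m < m' := by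
        intro p m k m' k' h h' hlt
        have h2 : p ∈ G (pre y (N + m) ++ [y (N + m)]) := by
          rw [← pre_succ]
          exact hG.mono ((pre_prefix y (by omega)).trans (List.prefix_append _ _)) h'
        exact hj m k (hG.disj _ _ _ _ h h2)
      intro p m k m' k' h h'
      have := key p m k m' k' h h'
      have := key p m' k' m k h' h
      omega
    · intro m k x hxA hx
      refine ⟨a, haA, hmin x ⟨hxA, hG.mono ((hwc m).trans (List.prefix_append _ _)) hx⟩, haw, ?_⟩
      intro h
      have h2 : a ∈ G (pre y (N + m) ++ [y (N + m)]) := by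
        rw [← pre_succ]
        exact hy _
      exact hj m k (hG.disj _ _ _ _ h h2)
  · push Not at hA
    refine ⟨fun m => w ++ [m], fun _ k => k, fun m => List.prefix_append _ _,
      fun m => Function.injective_id, ?_, ?_, ?_⟩
    · intro p hp _
      obtain ⟨m, hm⟩ := (hG.split _ _).1 hp
      obtain ⟨k, hk⟩ := (hG.split _ _).1 hm
      exact ⟨m, k, hk⟩
    · intro p m k m' k' h h'
      exact hG.disj w p m m' ((hG.split _ _).2 ⟨k, h⟩) ((hG.split _ _).2 ⟨k', h'⟩)
    · intro m k x hxA hx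
      refine absurd ?_ (hA x hxA)
      exact (hG.split _ _).2 ⟨m, (hG.split _ _).2 ⟨k, hx⟩⟩

theorem limit (hG : Sch G) (W : ℕ → List ℕ) (h : ∀ n, seqLT (W n) (W (n + 1))) :
    ∃ p, ∀ q, (∀ n, q ∈ G (W n)) ↔ q = p := by
  have hlen : ∀ n, n ≤ (W n).length := by
    intro n
    induction n with
    | zero => omega
    | succ n ih => have := seqLT_length (h n); omega
  have hm : ∀ n m, n ≤ m → W n <+: W m := by
    intro n m hnm
    induction m, hnm using Nat.le_induction with
    | base => exact List.prefix_rfl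
    | succ m _ ih => exact ih.trans (h m).1
  obtain ⟨y, hy⟩ := chain_pre (range W)
    (by
      rintro _ ⟨n, rfl⟩ _ ⟨m, rfl⟩
      rcases le_total n m with h | h
      · exact Or.inl (hm _ _ h)
      · exact Or.inr (hm _ _ h))
    (fun n => ⟨_, ⟨n + 1, rfl⟩, by have := hlen (n + 1); omega⟩)
  obtain ⟨p, hp⟩ := hG.branch y
  refine ⟨p, fun q => ?_⟩
  rw [← hp q]
  constructor
  · intro hq n
    have : pre y n <+: W n := by
      rw [hy (W n) ⟨n, rfl⟩]
      exact pre_prefix y (hlen n)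
    exact hG.mono this (hq n)
  · intro hq n
    rw [hy (W n) ⟨n, rfl⟩]
    exact hq _

theorem nonempty (hG : Sch G) (l : List ℕ) : (G l).Nonempty := by
  obtain ⟨p, hp⟩ := hG.branch fun i => l.getD i 0
  refine ⟨p, ?_⟩
  have h := (hp p).2 rfl l.length
  have e : pre (fun i => l.getD i 0) l.length = l := by
    apply List.ext_getElem
    · rw [pre_length]
    · intro i h1 h2
      simp [pre, h2]
  rwa [e] at h

end Sch

/-- The leaves of the new tree above a given node. -/
def nd {Y : Type u} (G : List ℕ → Set Y) (d : List ℕ → ℕ → ℕ → List ℕ) :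
    List ℕ → List ℕ → Set Y
  | w, [] => G w
  | w, [m] => ⋃ k, G (d w m k)
  | w, m :: k :: t => nd G d (d w m k) t

section nd

variable {Y : Type u} (G : List ℕ → Set Y) (d : List ℕ → ℕ → ℕ → List ℕ)

theorem nd_open [TopologicalSpace Y] (ho : ∀ l, IsOpen (G l)) : ∀ w l, IsOpen (nd G d w l)
  | w, [] => by simpa [nd] using ho w
  | w, [m] => by simpa [nd] using isOpen_iUnion fun k => ho _
  | w, m :: k :: t => by simpa [nd] using nd_open ho (d w m k) t

theorem nd_split (h1 : ∀ w p, p ∈ G w ↔ ∃ m k, p ∈ G (d w m k)) :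
    ∀ w l p, p ∈ nd G d w l ↔ ∃ n, p ∈ nd G d w (l ++ [n])
  | w, [], p => by simpa [nd] using h1 w p
  | w, [m], p => by simp [nd]
  | w, m :: k :: t, p => by simpa [nd] using nd_split h1 (d w m k) t p

theorem nd_disj (h2 : ∀ w p m k m' k', p ∈ G (d w m k) → p ∈ G (d w m' k') → m = m' ∧ k = k') :
    ∀ w l p n n', p ∈ nd G d w (l ++ [n]) → p ∈ nd G d w (l ++ [n']) → n = n'
  | w, [], p, n, n' => by
    simp only [nd, List.nil_append, mem_iUnion]
    rintro ⟨k, h⟩ ⟨k', h'⟩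
    exact (h2 _ _ _ _ _ _ h h').1
  | w, [m], p, n, n' => by
    simp only [nd, List.cons_append, List.nil_append]
    intro h h'
    exact (h2 _ _ _ _ _ _ h h').2
  | w, m :: k :: t, p, n, n' => by simpa [nd] using nd_disj h2 (d w m k) t p n n'

theorem nd_pre (x : ℕ → ℕ) (W : ℕ → List ℕ)
    (hW : ∀ n, W (n + 1) = d (W n) (x (2 * n)) (x (2 * n + 1))) (n : ℕ) :
    ∀ t, nd G d (W 0) (pre x (2 * n) ++ t) = nd G d (W n) t := by
  induction n with
  | zero => intro t; simp [pre_zero]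
  | succ n ih =>
    intro t
    rw [show 2 * (n + 1) = 2 * n + 1 + 1 by ring, pre_succ, pre_succ, List.append_assoc,
      List.append_assoc, ih, hW]
    simp [nd]

theorem nd_sch (h0 : ∀ p, p ∈ G []) (h1 : ∀ w p, p ∈ G w ↔ ∃ m k, p ∈ G (d w m k))
    (h2 : ∀ w p m k m' k', p ∈ G (d w m k) → p ∈ G (d w m' k') → m = m' ∧ k = k')
    (h3 : ∀ W : ℕ → List ℕ, (∀ n, ∃ m k, W (n + 1) = d (W n) m k) →
      ∃ p, ∀ q, (∀ n, q ∈ G (W n)) ↔ q = p) : Sch (nd G d []) := by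
  refine ⟨by simpa [nd] using h0, nd_split G d h1 _, nd_disj G d h2 _, fun x => ?_⟩
  let W : ℕ → List ℕ := fun n => Nat.rec [] (fun n w => d w (x (2 * n)) (x (2 * n + 1))) n
  have hW : ∀ n, W (n + 1) = d (W n) (x (2 * n)) (x (2 * n + 1)) := fun n => rfl
  obtain ⟨p, hp⟩ := h3 W fun n => ⟨_, _, hW n⟩
  refine ⟨p, fun q => ?_⟩
  rw [← hp q]
  have hev : ∀ n, nd G d [] (pre x (2 * n)) = G (W n) := by
    intro n
    have := nd_pre G d x W hW n []
    rw [List.append_nil] at this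
    exact this
  constructor
  · intro h n
    rw [← hev n]
    exact h _
  · intro h n
    rcases Nat.even_or_odd' n with ⟨k, rfl | rfl⟩
    · rw [hev]; exact h k
    · refine (nd_split G d h1 _ _ _).2 ⟨x (2 * k + 1), ?_⟩
      rw [← pre_succ, show 2 * k + 1 + 1 = 2 * (k + 1) by ring, hev]
      exact h (k + 1)

end nd

end FolAux

/-- Proposition `prop.f.tree.for.X-A` of the paper. -/
theorem exists_baireFoliageTree_on_cocountable_subspace
    {X : Type u} [TopologicalSpace X] (F : FoliageTree X)
    (hF : F.IsBaireFoliageTree) (A : Set X) (hA : A.Countable) :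
    ∃ H : FoliageTree ↥(Aᶜ), H.IsBaireFoliageTree ∧
      ∀ p : ↥(Aᶜ), ∃ f : ℕ → ℕ, StrictMono f ∧
        ∀ U ∈ nhds (p : X),
          {k | ∃ n : ℕ, k = 2 * n + 1 ∧ f n ∈ F.rise (p : X) U} ⊆
            H.rise p (Subtype.val ⁻¹' U) := by
  obtain ⟨e⟩ := hF.2.2.1
  have hG := FolAux.sch_of_tree F e hF
  have hGo : ∀ l, IsOpen (F.leaf (e.symm l)) := fun l => hF.1 _
  set G : List ℕ → Set X := fun l => F.leaf (e.symm l) with hGdef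
  obtain ⟨ν, hν⟩ := Set.countable_iff_exists_injOn.1 hA
  choose c j hwc hj hex hdis hrem using hG.step A ν
  let d : List ℕ → ℕ → ℕ → List ℕ := fun w m k => c w m ++ [j w m k]
  have hwd : ∀ w m k, seqLT w (d w m k) := by
    intro w m k
    refine FolAux.seqLT_of_prefix ((hwc w m).trans (List.prefix_append _ _)) ?_
    have := (hwc w m).length_le
    simp only [d, List.length_append, List.length_singleton]
    omega
  let G' : List ℕ → Set ↥(Aᶜ) := fun l => Subtype.val ⁻¹' G l
  have h1 : ∀ w p, p ∈ G' w ↔ ∃ m k, p ∈ G' (d w m k) := by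
    intro w p
    constructor
    · intro h
      exact hex w p.1 h p.2
    · rintro ⟨m, k, h⟩
      exact hG.mono (hwd w m k).1 h
  have hL : FolAux.Sch (FolAux.nd G' d []) := by
    refine FolAux.nd_sch G' d (fun p => hG.root p.1) h1 ?_ ?_
    · intro w p m k m' k' h h'
      have hm : m = m' := hdis w p.1 m k m' k' h h'
      subst hm
      exact ⟨rfl, hj w m (hG.disj _ _ _ _ h h')⟩
    · intro W hW
      have hWlt : ∀ n, seqLT (W n) (W (n + 1)) := by
        intro n
        obtain ⟨m, k, h⟩ := hW n
        rw [h]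
        exact hwd _ _ _
      obtain ⟨p, hp⟩ := hG.limit W hWlt
      have hpW := (hp p).2 rfl
      have hpA : p ∉ A := by
        intro hpA
        let S : ℕ → Set X := fun n => {a | a ∈ A ∧ ν a ≤ ν p ∧ a ∈ G (W n)}
        have hfin : ∀ n, (S n).Finite := by
          intro n
          refine Set.Finite.of_finite_image (f := ν) ((Set.finite_Iic (ν p)).subset ?_) ?_
          · rintro _ ⟨a, ha, rfl⟩
            exact ha.2.1
          · exact hν.mono fun a ha => ha.1
        have hlt : ∀ n, (S (n + 1)).ncard < (S n).ncard := by
          intro n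
          refine Set.ncard_lt_ncard ?_ (hfin n)
          refine (Set.ssubset_iff_of_subset ?_).2 ?_
          · intro a ha
            exact ⟨ha.1, ha.2.1, hG.mono (hWlt n).1 ha.2.2⟩
          · obtain ⟨m, k, h⟩ := hW n
            have hpn := hpW (n + 1)
            rw [h] at hpn
            obtain ⟨a, haA, hle, haw, hna⟩ := hrem (W n) m k p hpA hpn
            refine ⟨a, ⟨haA, hle, haw⟩, fun h' => hna ?_⟩
            have := h'.2.2
            rw [h] at this
            exact this
        have hle : ∀ n, (S n).ncard + n ≤ (S 0).ncard := by
          intro n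
          induction n with
          | zero => omega
          | succ n ih => have := hlt n; omega
        have := hle ((S 0).ncard + 1)
        omega
      refine ⟨⟨p, hpA⟩, fun q => ?_⟩
      rw [Subtype.ext_iff, ← hp q.1]
      exact Iff.rfl
  refine ⟨FolAux.seqTree (FolAux.nd G' d []), FolAux.baire_of_sch _ hL
    (FolAux.nd_open G' d (fun l => (hGo l).preimage continuous_subtype_val) _), ?_⟩
  intro p
  choose! nm nk hn using fun w => (h1 w p).1
  let W : ℕ → List ℕ := fun n => Nat.rec [] (fun _ w => d w (nm w) (nk w)) n
  have hWs : ∀ n, W (n + 1) = d (W n) (nm (W n)) (nk (W n)) := fun n => rfl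
  have hpW : ∀ n, p ∈ G' (W n) := by
    intro n
    induction n with
    | zero => exact hG.root p.1
    | succ n ih => rw [hWs]; exact hn _ ih
  let x : ℕ → ℕ := fun i => if i % 2 = 0 then nm (W (i / 2)) else nk (W (i / 2))
  have hx0 : ∀ n, x (2 * n) = nm (W n) := by
    intro n
    simp [x]
  have hx1 : ∀ n, x (2 * n + 1) = nk (W n) := by
    intro n
    have e1 : (2 * n + 1) / 2 = n := by omega
    have e2 : (2 * n + 1) % 2 = 1 := by omega
    simp [x, e1, e2]
  have hnd := FolAux.nd_pre G' d x W (fun n => by rw [hWs, hx0, hx1])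
  refine ⟨fun n => (c (W n) (nm (W n))).length, strictMono_nat_of_lt_succ fun n => ?_, ?_⟩
  · have h := (hwc (W (n + 1)) (nm (W (n + 1)))).length_le
    have h' : (W (n + 1)).length = (c (W n) (nm (W n))).length + 1 := by
      rw [hWs]; simp [d]
    omega
  · rintro U hU _ ⟨n, rfl, z, hz, hpi, hht⟩
    have hpd : p.1 ∈ G (d (W n) (nm (W n)) (nk (W n))) := hn _ (hpW n)
    have hpc : p.1 ∈ G (c (W n) (nm (W n))) := hG.mono (List.prefix_append _ _) hpd
    have hzl : (e z).length = (c (W n) (nm (W n))).length := by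
      rw [FolAux.height_eq F e] at hht
      exact_mod_cast hht
    have hzc : e z = c (W n) (nm (W n)) := by
      refine hG.uniq _ (p := p.1) ?_ hpc hzl rfl
      have hz' : p.1 ∈ F.leaf z := hz
      simpa [hGdef] using hz'
    obtain ⟨S, hS, -, hSU⟩ := hpi U rfl ⟨_, mem_of_mem_nhds hU⟩
    obtain ⟨D, hD, rfl⟩ := (FolAux.mem_shoot F e z S).1 hS
    rw [hzc] at hSU
    have hleaf : ∀ t, FolAux.nd G' d [] (FolAux.pre x (2 * n) ++ t) =
        FolAux.nd G' d (W n) t := hnd n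
    have hv : FolAux.pre x (2 * n + 1) = FolAux.pre x (2 * n) ++ [nm (W n)] := by
      rw [FolAux.pre_succ, hx0]
    have hv2 : ∀ k, FolAux.nd G' d [] (FolAux.pre x (2 * n + 1) ++ [k]) =
        G' (d (W n) (nm (W n)) k) := by
      intro k
      rw [hv, List.append_assoc, hleaf]
      simp [FolAux.nd]
    refine ⟨FolAux.pre x (2 * n + 1), ?_, ?_, ?_⟩
    · change p ∈ FolAux.nd G' d [] (FolAux.pre x (2 * n + 1))
      rw [hv, hleaf]
      simp only [FolAux.nd, mem_iUnion]
      exact ⟨_, hn _ (hpW n)⟩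
    · rintro _ rfl -
      let D' : Set ℕ := j (W n) (nm (W n)) ⁻¹' D
      have hD' : D'ᶜ.Finite := hD.preimage (hj _ _).injOn
      refine ⟨_, (FolAux.mem_shoot _ (FolAux.seqIso _) _ _).2 ⟨D', hD', rfl⟩, ?_, ?_⟩
      · obtain ⟨k, hk⟩ : D'.Nonempty := by
          have := hD'.infinite_compl
          rw [compl_compl] at this
          exact this.nonempty
        obtain ⟨q, hq⟩ := hL.nonempty (FolAux.pre x (2 * n + 1) ++ [k])
        exact ⟨q, Set.mem_biUnion hk hq⟩
      · intro q hq
        obtain ⟨k, hk, hq⟩ := Set.mem_iUnion₂.1 hq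
        have hq' : q ∈ FolAux.nd G' d [] (FolAux.pre x (2 * n + 1) ++ [k]) := hq
        rw [hv2] at hq'
        exact hSU (Set.mem_biUnion hk hq')
    · refine (FolAux.height_eq (FolAux.seqTree (FolAux.nd G' d [])) (FolAux.seqIso _) _).trans ?_
      exact congrArg (Nat.cast : ℕ → Ordinal) (FolAux.pre_length x (2 * n + 1))
end
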